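/- Let q be a prime power with q > 2 and let S be an algebraic hypersurface of PG(6,q^2) of degree q+1 defined over GF(q^2), not containing any solid, with exactly q^11 + q^9 + q^7 + q^4 + q^2 + 1 rational points, and suppose there exists a solid Sigma_3 with |S ∩ Sigma_3| = q^4 + q^2 + 1. Then every hyperplane of PG(6,q^2) meets S in exactly q^9 + q^7 + q^4 + q^2 + 1 or exactly q^9 + q^7 + q^5 + q^4 + q^2 + 1 rational points; in particular, no hyperplane meets S in exactly q^9 + q^7 + q^5 + q^2 + 1 rational points. -/

import Mathlib

open MvPolynomial Module

/-- The set of points of the projective subspace of `PG(n-1, F)` determined by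
the linear subspace `W` of `F^n`. -/
def projPts {F : Type} [Field F] {n : ℕ} (W : Submodule F (Fin n → F)) :
    Set (Projectivization F (Fin n → F)) :=
  {P | P.submodule ≤ W}

/-- The set of `F`-rational points of the hypersurface of `PG(n-1, F)` defined by the
homogeneous polynomial `f`. -/
def hypersurfacePts {F : Type} [Field F] {n : ℕ} (f : MvPolynomial (Fin n) F) :
    Set (Projectivization F (Fin n → F)) :=
  {P | MvPolynomial.eval P.rep f = 0}


/-- restriction of a polynomial to the parametrised line `u + t m` -/
noncomputable def linePoly {R : Type*} [CommRing R] {n : ℕ} (f : MvPolynomial (Fin n) R)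
    (u m : Fin n → R) : Polynomial R :=
  MvPolynomial.aeval (fun j => Polynomial.C (u j) + Polynomial.X * Polynomial.C (m j)) f

lemma eval_linePoly {R : Type*} [CommRing R] {n : ℕ} (f : MvPolynomial (Fin n) R)
    (u m : Fin n → R) (t : R) :
    (linePoly f u m).eval t = MvPolynomial.eval (u + t • m) f := by
  unfold linePoly
  rw [← Polynomial.coe_evalRingHom, MvPolynomial.aeval_def, MvPolynomial.hom_eval₂,
    MvPolynomial.eval₂_eq_eval_map]
  have : (Polynomial.evalRingHom t).comp (algebraMap R (Polynomial R)) = RingHom.id R := by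
    ext; simp
  rw [this, MvPolynomial.map_id]
  congr 2
  ext j
  simp; ring

lemma linePoly_coeff {R : Type*} [CommRing R] {n : ℕ} {f : MvPolynomial (Fin n) R} {d : ℕ}
    (hf : f.IsHomogeneous d) (m : Fin n → R) :
    ∃ g : ℕ → MvPolynomial (Fin n) R, (∀ i j, i + j = d → (g i).IsHomogeneous j) ∧
      (∀ i, d < i → g i = 0) ∧ ∀ u i, (linePoly f u m).coeff i = MvPolynomial.eval u (g i) := by
  set F' : MvPolynomial (Fin (n+1)) R :=
    MvPolynomial.aeval (fun j : Fin n => (X j.succ + C (m j) * X 0 : MvPolynomial (Fin (n+1)) R)) f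
    with hF'
  have hhom : F'.IsHomogeneous d := by
    have := hf.aeval (fun j : Fin n => (X j.succ + C (m j) * X 0 : MvPolynomial (Fin (n+1)) R))
      (n := 1) (fun j => (isHomogeneous_X _ _).add (isHomogeneous_C_mul_X _ _))
    rw [one_mul] at this
    exact this
  refine ⟨fun i => (finSuccEquiv R n F').coeff i, ?_, ?_, ?_⟩
  · intro i j hij
    exact hhom.finSuccEquiv_coeff_isHomogeneous i j hij
  · intro i hi
    by_contra h
    have := totalDegree_coeff_finSuccEquiv_add_le F' i h
    have := hhom.totalDegree_le
    omega
  · intro u i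
    have : linePoly f u m = (finSuccEquiv R n F').map (MvPolynomial.eval u) := by
      rw [hF', linePoly]
      have key : (MvPolynomial.aeval (fun j => Polynomial.C (u j) + Polynomial.X * Polynomial.C (m j)) :
          MvPolynomial (Fin n) R →ₐ[R] Polynomial R) =
          ((Polynomial.mapAlgHom (MvPolynomial.aeval u : MvPolynomial (Fin n) R →ₐ[R] R)).comp
            (finSuccEquiv R n).toAlgHom).comp
            (MvPolynomial.aeval (fun j : Fin n => (X j.succ + C (m j) * X 0 : MvPolynomial (Fin (n+1)) R))) := by
        apply MvPolynomial.algHom_ext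
        intro j
        simp [finSuccEquiv_apply]
      have h2 := congrArg (fun φ => φ f) key
      simp only [AlgHom.comp_apply] at h2
      rw [h2]
      rfl
    rw [this, Polynomial.coeff_map]

lemma linePoly_natDegree_le {R : Type*} [CommRing R] {n : ℕ} {f : MvPolynomial (Fin n) R} {d : ℕ}
    (hf : f.IsHomogeneous d) (u m : Fin n → R) : (linePoly f u m).natDegree ≤ d := by
  obtain ⟨g, h1, h2, h3⟩ := linePoly_coeff hf m
  rw [Polynomial.natDegree_le_iff_coeff_eq_zero]
  intro N hN
  rw [h3, h2 N hN, map_zero]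

lemma hom_eval_zero {R : Type*} [CommRing R] {n : ℕ} {f : MvPolynomial (Fin n) R} {d : ℕ}
    (hf : f.IsHomogeneous d) (hd : d ≠ 0) : MvPolynomial.eval (0 : Fin n → R) f = 0 := by
  rw [MvPolynomial.eval_zero, MvPolynomial.constantCoeff_eq]
  apply hf.coeff_eq_zero
  simpa using hd.symm

lemma hom_eval_smul {R : Type*} [CommRing R] {n : ℕ} {f : MvPolynomial (Fin n) R} {d : ℕ}
    (hf : f.IsHomogeneous d) (c : R) (v : Fin n → R) :
    MvPolynomial.eval (c • v) f = c ^ d * MvPolynomial.eval v f := by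
  rw [MvPolynomial.eval_eq, MvPolynomial.eval_eq, Finset.mul_sum]
  refine Finset.sum_congr rfl fun s hs => ?_
  have hd := hf.degree_eq_sum_deg_support hs
  simp only [Pi.smul_apply, smul_eq_mul, mul_pow, Finset.prod_mul_distrib]
  rw [Finset.prod_pow_eq_pow_sum, ← hd]
  ring

lemma linePoly_coeff_top {R : Type*} [CommRing R] {n : ℕ} {f : MvPolynomial (Fin n) R} {d : ℕ}
    (hf : f.IsHomogeneous d) (u m : Fin n → R) :
    (linePoly f u m).coeff d = MvPolynomial.eval m f := by
  obtain ⟨g, h1, h2, h3⟩ := linePoly_coeff hf m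
  have h0 : MvPolynomial.eval u (g d) = MvPolynomial.eval 0 (g d) := by
    have := h1 d 0 (by simp)
    rw [← mem_homogeneousSubmodule, homogeneousSubmodule_zero] at this
    obtain ⟨r, hr⟩ := Submodule.mem_one.mp this
    rw [← hr]; simp
  rw [h3, h0, ← h3]
  have h4 := eval_linePoly f 0 m 1
  rw [one_smul, zero_add] at h4
  rw [← h4, Polynomial.eval_eq_sum_range' (Nat.lt_succ_of_le (linePoly_natDegree_le hf 0 m)),
    Finset.sum_range_succ, Finset.sum_eq_zero, zero_add]
  · simp
  · intro i hi
    rw [h3, hom_eval_zero (h1 i (d - i) (by have := Finset.mem_range.mp hi; omega))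
      (by have := Finset.mem_range.mp hi; omega), zero_mul]

lemma finrank_restrictTotalDegree_two (F : Type*) [Field F] (m : ℕ) :
    finrank F (restrictTotalDegree (Fin 2) F m) * 2 = (m + 1) * (m + 2) := by
  have hb := finrank_eq_nat_card_basis
    (basisRestrictSupport F {n : Fin 2 →₀ ℕ | (n.sum fun _ e => e) ≤ m})
  have hb' : finrank F (restrictTotalDegree (Fin 2) F m) =
    Nat.card {n : Fin 2 →₀ ℕ | (n.sum fun _ e => e) ≤ m} := hb
  rw [hb']
  have : Nat.card {n : Fin 2 →₀ ℕ | (n.sum fun _ e => e) ≤ m} =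
      ((Finset.range (m+1)).sigma (fun i => Finset.range (m + 1 - i))).card := by
    rw [Nat.card_coe_set_eq, ← Set.ncard_coe_finset]
    have hsum : ∀ n : Fin 2 →₀ ℕ, (n.sum fun _ e => e) = n 0 + n 1 := by
      intro n
      rw [Finsupp.sum_fintype _ _ (fun _ => rfl), Fin.sum_univ_two]
    refine Set.ncard_congr (fun n _ => (⟨n 0, n 1⟩ : Σ _ : ℕ, ℕ)) ?_ ?_ ?_
    · intro n hn
      have hn' : n 0 + n 1 ≤ m := by rw [← hsum]; exact hn
      simp only [Finset.coe_sigma, Finset.coe_range, Set.mem_sigma_iff, Set.mem_Iio]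
      omega
    · intro a b _ _ hab
      simp only [Sigma.mk.injEq, heq_eq_eq] at hab
      ext i
      fin_cases i
      · exact hab.1
      · exact hab.2
    · rintro ⟨i, j⟩ hij
      simp only [Finset.coe_sigma, Finset.coe_range, Set.mem_sigma_iff, Set.mem_Iio] at hij
      refine ⟨Finsupp.equivFunOnFinite.symm ![i, j], ?_, ?_⟩
      · change _ ≤ m
        rw [hsum]
        simp
        omega
      · simp
  rw [this, Finset.card_sigma]
  simp only [Finset.card_range]
  have h2 := Finset.sum_range_reflect (fun i => i + 1) (m+1)
  have h3 : ∑ i ∈ Finset.range (m+1), (m + 1 - i) = ∑ i ∈ Finset.range (m+1), (i + 1) := by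
    rw [← h2]
    refine Finset.sum_congr rfl fun i hi => ?_
    have := Finset.mem_range.mp hi
    omega
  rw [h3]
  have : ∀ k, (∑ i ∈ Finset.range (k+1), (i + 1)) * 2 = (k+1)*(k+2) := by
    intro k
    induction k with
    | zero => simp
    | succ k ih => rw [Finset.sum_range_succ, add_mul, ih]; ring
  exact this m

lemma finrank_map_mulLeft {F : Type*} [Field F] (e : MvPolynomial (Fin 2) F) (he : e ≠ 0)
    (W : Submodule F (MvPolynomial (Fin 2) F)) :
    finrank F (W.map (LinearMap.mulLeft F e)) = finrank F W := by
  apply LinearEquiv.finrank_eq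
  exact (Submodule.equivMapOfInjective _ (mul_right_injective₀ he) W).symm

lemma bezout_bound {F : Type*} [Field F] {Y : Type*} [AddCommGroup Y] [Module F Y]
    [FiniteDimensional F Y] (e h : MvPolynomial (Fin 2) F) (he : e ≠ 0) (hh : h ≠ 0)
    (hr : IsRelPrime e h) (L : MvPolynomial (Fin 2) F →ₗ[F] Y) (hsurj : Function.Surjective L)
    (hke : ∀ a, L (e * a) = 0) (hkh : ∀ a, L (h * a) = 0) :
    finrank F Y ≤ e.totalDegree * h.totalDegree := by
  set D := e.totalDegree with hD
  set E := h.totalDegree with hE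
  -- find a degree in which `L` is surjective
  obtain ⟨m0, hm0⟩ : ∃ m0, ∀ m, m0 ≤ m → ∀ y, ∃ a, a.totalDegree ≤ m ∧ L a = y := by
    let b := Module.finBasis F Y
    choose g hg using fun i => hsurj (b i)
    refine ⟨Finset.univ.sup fun i => (g i).totalDegree, fun m hm y => ?_⟩
    refine ⟨∑ i, b.repr y i • g i, ?_, ?_⟩
    · refine (totalDegree_finsetSum _ _).trans (Finset.sup_le fun i _ => ?_)
      refine (totalDegree_smul_le _ _).trans ?_
      exact (Finset.le_sup (f := fun i => (g i).totalDegree) (Finset.mem_univ i)).trans hm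
    · rw [map_sum]
      simp only [map_smul, hg]
      exact b.sum_repr y
  set m := m0 + D + E with hm
  let W : ℕ → Submodule F (MvPolynomial (Fin 2) F) := fun k => restrictTotalDegree (Fin 2) F k
  have hW : ∀ k p, p ∈ W k ↔ p.totalDegree ≤ k := fun k p => mem_restrictTotalDegree _ _ _
  have hfin : ∀ k, FiniteDimensional F (W k) := fun k => inferInstance
  have hT : ∀ k, finrank F (W k) * 2 = (k+1)*(k+2) := finrank_restrictTotalDegree_two F
  set A := (W (m0 + E)).map (LinearMap.mulLeft F e)
  set B := (W (m0 + D)).map (LinearMap.mulLeft F h)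
  have hA : finrank F A = finrank F (W (m0 + E)) := finrank_map_mulLeft e he _
  have hB : finrank F B = finrank F (W (m0 + D)) := finrank_map_mulLeft h hh _
  have hI : A ⊓ B ≤ (W m0).map (LinearMap.mulLeft F (e * h)) := by
    rintro x ⟨⟨a, ha, rfl⟩, ⟨b, hb, hab⟩⟩
    simp only [LinearMap.mulLeft_apply] at hab ⊢
    have h1 : e ∣ h * b := ⟨a, hab⟩
    obtain ⟨c, hc⟩ := hr.dvd_of_dvd_mul_left h1
    refine ⟨c, ?_, ?_⟩
    · by_cases hc0 : c = 0
      · rw [hc0]; exact Submodule.zero_mem _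
      · have hb' := (hW _ _).mp hb
        rw [hc, totalDegree_mul_of_isDomain he hc0] at hb'
        exact (hW _ _).mpr (by omega)
    · simp only [LinearMap.mulLeft_apply]
      rw [← hab, hc]; ring
  have hIf : finrank F (A ⊓ B : Submodule F _) ≤ finrank F (W m0) := by
    rw [← finrank_map_mulLeft (e * h) (mul_ne_zero he hh) (W m0)]
    exact Submodule.finrank_mono hI
  have hsum := Submodule.finrank_sup_add_finrank_inf_eq A B
  have hAB : A ⊔ B ≤ W m ⊓ LinearMap.ker L := by
    refine sup_le ?_ ?_
    · rintro x ⟨a, ha, rfl⟩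
      refine ⟨(hW _ _).mpr ?_, ?_⟩
      · have := totalDegree_mul e a
        have := (hW _ _).mp ha
        simp only [LinearMap.mulLeft_apply]
        omega
      · simpa using hke a
    · rintro x ⟨a, ha, rfl⟩
      refine ⟨(hW _ _).mpr ?_, ?_⟩
      · have := totalDegree_mul h a
        have := (hW _ _).mp ha
        simp only [LinearMap.mulLeft_apply]
        omega
      · simpa using hkh a
  have hABf : finrank F (A ⊔ B : Submodule F _) ≤ finrank F (W m ⊓ LinearMap.ker L : Submodule F _) := by
    have : FiniteDimensional F (W m ⊓ LinearMap.ker L : Submodule F _) :=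
      Submodule.finiteDimensional_inf_left _ _
    exact Submodule.finrank_mono hAB
  have hrn := LinearMap.finrank_range_add_finrank_ker (L.domRestrict (W m))
  have hrange : LinearMap.range (L.domRestrict (W m)) = ⊤ := by
    rw [LinearMap.range_eq_top]
    intro y
    obtain ⟨a, ha, rfl⟩ := hm0 m (by omega) y
    exact ⟨⟨a, (hW _ _).mpr ha⟩, rfl⟩
  rw [hrange, finrank_top] at hrn
  have hker : finrank F (LinearMap.ker (L.domRestrict (W m))) =
      finrank F (W m ⊓ LinearMap.ker L : Submodule F _) := by
    have h1 : (LinearMap.ker (L.domRestrict (W m))).map (W m).subtype = W m ⊓ LinearMap.ker L := by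
      rw [LinearMap.ker_domRestrict, Submodule.map_comap_subtype]
    rw [← h1]
    exact (LinearEquiv.finrank_eq (Submodule.equivMapOfInjective _ (W m).injective_subtype _))
  have e1 := hT m
  have e2 := hT (m0 + E)
  have e3 := hT (m0 + D)
  have e4 := hT m0
  rw [hker] at hrn
  zify at *
  nlinarith

section planeA
variable {F : Type*} [Field F]

/-- polar substitution `x ↦ t s, y ↦ s` -/
noncomputable def polarSub : MvPolynomial (Fin 2) F →ₐ[F] Polynomial (Polynomial F) :=
  MvPolynomial.aeval ![Polynomial.C Polynomial.X * Polynomial.X, Polynomial.X]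

lemma polarSub_monomial (a : Fin 2 →₀ ℕ) (c : F) :
    polarSub (monomial a c) =
      Polynomial.monomial (a 0 + a 1) (Polynomial.monomial (a 0) c) := by
  rw [polarSub, aeval_monomial, Finsupp.prod_fintype _ _ (by simp)]
  simp only [Fin.prod_univ_two, Matrix.cons_val_zero, Matrix.cons_val_one]
  rw [← Polynomial.C_mul_X_pow_eq_monomial, ← Polynomial.C_mul_X_pow_eq_monomial]
  rw [show (algebraMap F (Polynomial (Polynomial F))) c = Polynomial.C (Polynomial.C c) from rfl]
  simp only [map_mul, map_pow]
  ring

lemma polarSub_pderiv_zero (φ : MvPolynomial (Fin 2) F) (i : ℕ) :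
    (polarSub (pderiv 0 φ)).coeff i = Polynomial.derivative ((polarSub φ).coeff (i+1)) := by
  induction φ using MvPolynomial.induction_on' with
  | add p r hp hr => simp [hp, hr]
  | monomial a c =>
    rw [pderiv_monomial, polarSub_monomial, polarSub_monomial, Polynomial.coeff_monomial,
      Polynomial.coeff_monomial]
    rcases Nat.eq_zero_or_pos (a 0) with h | h
    · simp [h]
      split_ifs <;> simp
    · simp only [Finsupp.coe_tsub, Pi.sub_apply, Finsupp.single_eq_same]
      rw [show (Finsupp.single (0: Fin 2) 1 : Fin 2 →₀ ℕ) 1 = 0 by simp]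
      by_cases h2 : a 0 + a 1 = i + 1
      · rw [if_pos (by omega), if_pos h2, Polynomial.derivative_monomial]
      · rw [if_neg (by omega), if_neg h2]; simp

lemma polarSub_euler (φ : MvPolynomial (Fin 2) F) (i : ℕ) :
    (polarSub (pderiv 1 φ)).coeff i + Polynomial.X * (polarSub (pderiv 0 φ)).coeff i
      = ((i + 1 : ℕ) : Polynomial F) * ((polarSub φ).coeff (i+1)) := by
  induction φ using MvPolynomial.induction_on' with
  | add p r hp hr => 
    simp only [map_add, Polynomial.coeff_add, mul_add, ← hp, ← hr]; ring
  | monomial a c =>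
    rw [pderiv_monomial, pderiv_monomial]
    simp only [polarSub_monomial, Polynomial.coeff_monomial,
      Finsupp.coe_tsub, Pi.sub_apply, Finsupp.single_eq_same]
    rw [show (Finsupp.single (0: Fin 2) 1 : Fin 2 →₀ ℕ) 1 = 0 by simp,
      show (Finsupp.single (1: Fin 2) 1 : Fin 2 →₀ ℕ) 0 = 0 by simp]
    have e0 : (if a 0 - 1 + (a 1 - 0) = i then Polynomial.monomial (a 0 - 1) (c * (a 0 : F)) else 0)
      = (if a 0 + a 1 = i + 1 then Polynomial.monomial (a 0 - 1) (c * (a 0 : F)) else 0) := by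
      rcases Nat.eq_zero_or_pos (a 0) with h | h
      · simp [h]
      · congr 1; apply propext; omega
    have e1 : (if a 0 - 0 + (a 1 - 1) = i then Polynomial.monomial (a 0 - 0) (c * (a 1 : F)) else 0)
      = (if a 0 + a 1 = i + 1 then Polynomial.monomial (a 0) (c * (a 1 : F)) else 0) := by
      rcases Nat.eq_zero_or_pos (a 1) with h | h
      · simp [h]
      · congr 1; apply propext; omega
    rw [e0, e1]
    split_ifs with h
    · rw [← h]
      have : Polynomial.X * Polynomial.monomial (a 0 - 1) (c * (a 0 : F)) = 
          Polynomial.monomial (a 0) (c * (a 0 : F)) := by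
        rcases Nat.eq_zero_or_pos (a 0) with h | h
        · simp [h]
        · rw [Polynomial.X_mul_monomial, Nat.sub_add_cancel h]
      rw [this, ← map_add]
      rw [← Polynomial.C_eq_natCast, Polynomial.C_mul_monomial]
      congr 1; push_cast; ring
    · simp

lemma polarSub_natDegree_le (φ : MvPolynomial (Fin 2) F) :
    (polarSub φ).natDegree ≤ φ.totalDegree := by
  rw [polarSub]
  conv_lhs => rw [← support_sum_monomial_coeff φ]
  rw [map_sum]
  apply Polynomial.natDegree_sum_le_of_forall_le
  intro a ha
  have := polarSub_monomial a (coeff a φ)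
  rw [polarSub] at this
  rw [this]
  refine (Polynomial.natDegree_monomial_le _).trans ?_
  have := le_totalDegree ha
  rw [Finsupp.sum_fintype _ _ (by simp)] at this
  simpa using this

/-- restriction of `f` to affine plane `w + x u + y v` -/
noncomputable def planePoly {n : ℕ} (f : MvPolynomial (Fin n) F) (w u v : Fin n → F) :
    MvPolynomial (Fin 2) F :=
  MvPolynomial.aeval (fun j => C (w j) + X 0 * C (u j) + X 1 * C (v j)) f

lemma eval_planePoly {n : ℕ} (f : MvPolynomial (Fin n) F) (w u v : Fin n → F) (P : Fin 2 → F) :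
    eval P (planePoly f w u v) = eval (w + P 0 • u + P 1 • v) f := by
  unfold planePoly
  have : (aeval P : MvPolynomial (Fin 2) F →ₐ[F] F).comp
    (MvPolynomial.aeval (fun j => C (w j) + X 0 * C (u j) + X 1 * C (v j))) 
     = (aeval (w + P 0 • u + P 1 • v) : MvPolynomial (Fin n) F →ₐ[F] F) := by
    apply MvPolynomial.algHom_ext
    intro j
    simp
  have h := congrArg (fun φ => φ f) this
  simpa [aeval_eq_eval] using h

lemma linePoly_planePoly {n : ℕ} (f : MvPolynomial (Fin n) F) (w u v : Fin n → F) (P d : Fin 2 → F) :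
    linePoly (planePoly f w u v) P d =
      linePoly f (w + P 0 • u + P 1 • v) (d 0 • u + d 1 • v) := by
  unfold planePoly linePoly
  rw [← AlgHom.comp_apply]
  congr 1
  apply MvPolynomial.algHom_ext
  intro j
  simp only [AlgHom.comp_apply, aeval_X, map_add, map_mul, Pi.add_apply, Pi.smul_apply, smul_eq_mul]
  rw [show (C (w j) : MvPolynomial (Fin 2) F) = algebraMap F _ (w j) from rfl, 
    show (C (u j) : MvPolynomial (Fin 2) F) = algebraMap F _ (u j) from rfl,
    show (C (v j) : MvPolynomial (Fin 2) F) = algebraMap F _ (v j) from rfl]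
  simp only [AlgHom.commutes, Polynomial.algebraMap_eq]
  ring

lemma totalDegree_planePoly {n d : ℕ} {f : MvPolynomial (Fin n) F} (hf : f.IsHomogeneous d)
    (w u v : Fin n → F) : (planePoly f w u v).totalDegree ≤ d := by
  unfold planePoly
  rw [aeval_def, eval₂_eq']
  refine totalDegree_finsetSum_le ?_
  intro a ha
  refine (totalDegree_mul _ _).trans ?_
  rw [show (algebraMap F (MvPolynomial (Fin 2) F)) (coeff a f) = C (coeff a f) from rfl,
    totalDegree_C, zero_add]
  refine (totalDegree_finsetProd _ _).trans ?_
  have h1 : ∑ i, a i = d := by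
    have := hf (mem_support_iff.mp ha)
    rw [← this, Finsupp.weight_apply, Finsupp.sum_fintype _ _ (by simp)]
    simp
  rw [← h1]
  apply Finset.sum_le_sum
  intro i _
  refine (totalDegree_pow _ _).trans ?_
  conv_rhs => rw [← mul_one (a i)]
  gcongr
  refine (totalDegree_add _ _).trans (max_le ((totalDegree_add _ _).trans (max_le ?_ ?_)) ?_)
  · simp
  · refine (totalDegree_mul _ _).trans ?_; simp [totalDegree_X]
  · refine (totalDegree_mul _ _).trans ?_; simp [totalDegree_X]

lemma polarSub_planePoly {n : ℕ} (f : MvPolynomial (Fin n) F) (w u v : Fin n → F) :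
    polarSub (planePoly f w u v) = linePoly (MvPolynomial.map Polynomial.C f)
      (fun j => Polynomial.C (w j)) (fun j => Polynomial.C (v j) + Polynomial.X * Polynomial.C (u j)) := by
  unfold planePoly linePoly
  rw [← AlgHom.comp_apply]
  conv_rhs => rw [aeval_def, eval₂_map]
  rw [show (algebraMap (Polynomial F) (Polynomial (Polynomial F))).comp Polynomial.C
    = algebraMap F (Polynomial (Polynomial F)) from rfl, ← aeval_def]
  congr 1
  apply MvPolynomial.algHom_ext
  intro j
  rw [show (C : F →+* MvPolynomial (Fin 2) F) = algebraMap F _ from rfl]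
  simp only [AlgHom.comp_apply, aeval_X, map_add, map_mul, AlgHom.commutes]
  simp only [polarSub, aeval_X, Matrix.cons_val_zero, Matrix.cons_val_one]
  rw [show algebraMap F (Polynomial (Polynomial F)) = Polynomial.C.comp Polynomial.C from rfl]
  simp only [RingHom.comp_apply]
  ring

lemma polarSub_planePoly_top {n d : ℕ} {f : MvPolynomial (Fin n) F} (hf : f.IsHomogeneous d)
    (w u v : Fin n → F) :
    (polarSub (planePoly f w u v)).coeff d = linePoly f v u := by
  rw [polarSub_planePoly, linePoly_coeff_top (hf.map _), linePoly, aeval_def, eval_map]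
  rfl

end planeA

section planeB
variable {F : Type*} [Field F]

/-- the Stöhr–Voloch type polynomial -/
noncomputable def frobPoly (Q : ℕ) (φ : MvPolynomial (Fin 2) F) : MvPolynomial (Fin 2) F :=
  (X 0 ^ Q - X 0) * pderiv 0 φ + (X 1 ^ Q - X 1) * pderiv 1 φ

lemma frobPoly_totalDegree {Q d : ℕ} (hQ : 1 ≤ Q) {φ : MvPolynomial (Fin 2) F}
    (h : φ.totalDegree ≤ d + 1) : (frobPoly Q φ).totalDegree ≤ Q + d := by
  have hp : ∀ i : Fin 2, (pderiv i φ).totalDegree ≤ d := by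
    intro i
    conv_lhs => rw [← support_sum_monomial_coeff φ]
    rw [map_sum]
    refine totalDegree_finsetSum_le ?_
    intro a ha
    rw [pderiv_monomial]
    have h1 := le_totalDegree ha
    rw [Finsupp.sum_fintype _ _ (by simp)] at h1
    rcases Nat.eq_zero_or_pos (a i) with h2 | h2
    · simp [h2]
    refine (totalDegree_monomial_le _ _).trans ?_
    rw [Finsupp.sum_fintype _ _ (by simp)]
    simp only [Fin.sum_univ_two, Finsupp.coe_tsub, Pi.sub_apply] at h1 ⊢
    fin_cases i <;> simp at h2 ⊢ <;> omega
  have hx : ∀ i : Fin 2, ((X i ^ Q - X i : MvPolynomial (Fin 2) F)).totalDegree ≤ Q := by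
    intro i
    refine (totalDegree_sub _ _).trans (max_le ?_ ?_)
    · simp [totalDegree_X_pow]
    · simpa [totalDegree_X] using hQ
  refine (totalDegree_add _ _).trans (max_le ?_ ?_) <;>
  · refine (totalDegree_mul _ _).trans ?_
    exact add_le_add (hx _) (hp _)

lemma polarSub_frobPoly {Q q : ℕ} (hQ : 2 ≤ Q) (hqF : (q : F) = 0) {φ : MvPolynomial (Fin 2) F}
    (hφ : φ.totalDegree ≤ q + 1) :
    (polarSub (frobPoly Q φ)).coeff (Q + q) =
      (Polynomial.X ^ Q - Polynomial.X) * Polynomial.derivative ((polarSub φ).coeff (q+1))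
        + (polarSub φ).coeff (q+1) := by
  have hE := polarSub_euler φ q
  have h0 : (polarSub φ).coeff (Q + q - 1 + 1) = 0 := by
    apply Polynomial.coeff_eq_zero_of_natDegree_lt
    have := polarSub_natDegree_le φ
    omega
  have hE' := polarSub_euler φ (Q+q-1)
  have hD := polarSub_pderiv_zero φ q
  have hD' := polarSub_pderiv_zero φ (Q+q-1)
  rw [h0] at hE' hD'
  rw [hD', Polynomial.derivative_zero, mul_zero, mul_zero, add_zero] at hE'
  rw [Polynomial.derivative_zero] at hD'
  have hx0 : polarSub (X 0 : MvPolynomial (Fin 2) F) = Polynomial.C Polynomial.X * Polynomial.X := by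
    simp [polarSub]
  have hx1 : polarSub (X 1 : MvPolynomial (Fin 2) F) = Polynomial.X := by
    simp [polarSub]
  have : polarSub (frobPoly Q φ) = 
     Polynomial.C (Polynomial.X ^ Q) * (polarSub (pderiv 0 φ) * Polynomial.X ^ Q)
      - Polynomial.C Polynomial.X * (polarSub (pderiv 0 φ) * Polynomial.X ^ 1)
      + (polarSub (pderiv 1 φ) * Polynomial.X ^ Q - polarSub (pderiv 1 φ) * Polynomial.X ^ 1) := by
    simp only [frobPoly, map_add, map_mul, map_sub, map_pow, hx0, hx1]
    ring
  rw [this]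
  simp only [Polynomial.coeff_add, Polynomial.coeff_sub, Polynomial.coeff_C_mul,
    Polynomial.coeff_mul_X_pow']
  simp only [if_pos (show Q ≤ Q + q by omega), if_pos (show 1 ≤ Q + q by omega), hE', hD', Nat.add_sub_cancel_left, hD]
  rw [hD] at hE
  have hq1 : ((q + 1 : ℕ) : Polynomial F) = 1 := by
    rw [← Polynomial.C_eq_natCast]; push_cast; rw [hqF]; simp
  rw [hq1, one_mul] at hE
  linear_combination hE

lemma not_dvd_frobPoly {n q : ℕ} [Fintype F] (hcard : Fintype.card F = q ^ 2) (hqF : (q : F) = 0)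
    (hq : 2 ≤ q)
    {f : MvPolynomial (Fin n) F} (hf : f.IsHomogeneous (q+1)) (w u v : Fin n → F)
    (huv : ∀ s t : F, ¬ (s = 0 ∧ t = 0) → eval (s • u + t • v) f ≠ 0) :
    ¬ (planePoly f w u v ∣ frobPoly (q^2) (planePoly f w u v)) := by
  rintro ⟨k, hk⟩
  set f2 := planePoly f w u v with hf2
  set G := linePoly f v u with hG
  have hdeg : f2.totalDegree ≤ q + 1 := totalDegree_planePoly hf w u v
  have hGtop : (polarSub f2).coeff (q+1) = G := polarSub_planePoly_top hf w u v
  have hGc : G.coeff (q+1) = eval u f := linePoly_coeff_top hf v u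
  have hu : eval u f ≠ 0 := by simpa using huv 1 0 (by simp)
  have hGn : G.natDegree ≤ q + 1 := linePoly_natDegree_le hf v u
  have hG0 : G ≠ 0 := by rintro h; rw [h] at hGc; exact hu (by simpa using hGc.symm)
  have hQ2 : 2 ≤ q^2 := by nlinarith
  have hfr := polarSub_frobPoly (F := F) hQ2 hqF hdeg
  rw [hGtop, hk, map_mul] at hfr
  have hf2d : (polarSub f2).natDegree ≤ q + 1 := (polarSub_natDegree_le _).trans hdeg
  have hf2d' : (polarSub f2).natDegree = q + 1 := by
    apply le_antisymm hf2d
    apply Polynomial.le_natDegree_of_ne_zero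
    rw [hGtop]; exact hG0
  have hkd : (polarSub k).natDegree ≤ q^2 - 1 := by
    by_cases hk0 : polarSub k = 0
    · simp [hk0]
    have h1 : (polarSub f2 * polarSub k).natDegree ≤ q^2 + q := by
      rw [← map_mul, ← hk]
      exact (polarSub_natDegree_le _).trans (frobPoly_totalDegree (by omega) hdeg)
    rw [Polynomial.natDegree_mul (by rintro h; rw [h] at hf2d'; simp at hf2d') hk0, hf2d'] at h1
    omega
  have hcoef := Polynomial.coeff_mul_add_eq_of_natDegree_le hf2d hkd
  rw [show q + 1 + (q^2 - 1) = q^2 + q by omega, hfr, hGtop] at hcoef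
  have hdvd : G ∣ (Polynomial.X ^ (q^2) - Polynomial.X) * Polynomial.derivative G := by
    refine ⟨(polarSub k).coeff (q^2-1) - 1, ?_⟩
    linear_combination hcoef
  have hcop : IsCoprime G (Polynomial.X ^ (q^2) - Polynomial.X) := by
    have hsp : (Polynomial.X ^ (q^2) - Polynomial.X : Polynomial F) = ∏ a : F, (Polynomial.X - Polynomial.C a) := by
      have := Polynomial.prod_multiset_X_sub_C_of_monic_of_roots_card_eq
        (p := (Polynomial.X ^ (q^2) - Polynomial.X : Polynomial F)) ?_ ?_
      · rw [← this, ← hcard, FiniteField.roots_X_pow_card_sub_X]; rfl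
      · exact Polynomial.monic_X_pow_sub (by rw [Polynomial.degree_X]; exact_mod_cast (show 1 < q^2 by omega))
      · rw [← hcard, FiniteField.roots_X_pow_card_sub_X, 
          FiniteField.X_pow_card_sub_X_natDegree_eq _ Fintype.one_lt_card]; rfl
    rw [hsp]
    apply IsCoprime.prod_right
    intro a _
    rw [isCoprime_comm, (Polynomial.irreducible_X_sub_C a).coprime_iff_not_dvd,
      Polynomial.dvd_iff_isRoot, Polynomial.IsRoot, hG, eval_linePoly]
    have := huv a 1 (by simp)
    rwa [one_smul, add_comm] at this
  have hd2 := hcop.dvd_of_dvd_mul_left hdvd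
  have hd0 : Polynomial.derivative G = 0 := by
    by_contra h
    have := Polynomial.natDegree_le_of_dvd hd2 h
    have h3 : q + 1 ≤ G.natDegree := Polynomial.le_natDegree_of_ne_zero (by rw [hGc]; exact hu)
    have := Polynomial.natDegree_derivative_lt (p := G) (by omega)
    omega
  have := Polynomial.coeff_derivative G q
  rw [hd0, hGc, hqF] at this
  simp at this
  exact hu this.symm
end planeB

section counting
open Classical in
lemma count_lines {F D : Type*} [Field F] [Fintype F] [AddCommGroup D] [Module F D] [Fintype D]
    (P : D → Prop) :
    ∑ y ∈ Finset.univ.filter (fun y : D => y ≠ 0),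
      (Finset.univ.filter (fun t : F => t ≠ 0 ∧ P (t • y))).card
    = (Fintype.card F - 1) * (Finset.univ.filter (fun w : D => w ≠ 0 ∧ P w)).card := by
  have h1 : ∀ y : D, (Finset.univ.filter (fun t : F => t ≠ 0 ∧ P (t • y))).card
      = ∑ t ∈ Finset.univ.filter (fun t : F => t ≠ 0), if P (t • y) then 1 else 0 := by
    intro y
    rw [Finset.card_filter, Finset.sum_filter]
    apply Finset.sum_congr rfl
    intro t _
    by_cases h : t = 0 <;> simp [h]
  simp_rw [h1]
  rw [Finset.sum_comm]
  have h2 : ∀ t ∈ Finset.univ.filter (fun t : F => t ≠ 0),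
      (∑ y ∈ Finset.univ.filter (fun y : D => y ≠ 0), if P (t • y) then 1 else 0)
      = (Finset.univ.filter (fun w : D => w ≠ 0 ∧ P w)).card := by
    intro t ht
    have ht0 : t ≠ 0 := by simpa using ht
    rw [← Finset.sum_filter, ← Finset.card_eq_sum_ones, Finset.filter_filter]
    apply Finset.card_bij (fun y _ => t • y)
    · intro y hy; simpa [ht0] using hy
    · intro a _ b _ h; exact smul_right_injective _ ht0 h
    · intro w hw
      refine ⟨t⁻¹ • w, ?_, ?_⟩
      · simpa [ht0, smul_smul] using hw
      · simp [smul_smul, ht0]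
  rw [Finset.sum_congr rfl h2, Finset.sum_const, smul_eq_mul]
  congr 1
  rw [Finset.filter_ne' Finset.univ, Finset.card_erase_of_mem (Finset.mem_univ _), Finset.card_univ]

lemma ncard_setOf' {α : Type*} [Fintype α] (P : α → Prop) [DecidablePred P] :
    {x | P x}.ncard = (Finset.univ.filter P).card := by
  rw [Set.ncard_eq_toFinset_card', Set.toFinset_setOf]

lemma count_lines' {F D : Type*} [Field F] [Fintype F] [AddCommGroup D] [Module F D] [Fintype D]
    (P : D → Prop) [DecidableEq D] :
    ∑ y ∈ Finset.univ.filter (fun y : D => y ≠ 0), {t : F | t ≠ 0 ∧ P (t • y)}.ncard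
    = (Fintype.card F - 1) * {w : D | w ≠ 0 ∧ P w}.ncard := by
  classical
  rw [ncard_setOf']
  simp_rw [ncard_setOf']
  convert count_lines (F := F) P

lemma count_lines_le {F D : Type*} [Field F] [Fintype F] [AddCommGroup D] [Module F D] [Fintype D]
    (P : D → Prop) (b : ℕ)
    (h : ∀ y : D, y ≠ 0 → {t : F | t ≠ 0 ∧ P (t • y)}.ncard ≤ b) :
    (Fintype.card F - 1) * {w : D | w ≠ 0 ∧ P w}.ncard
      ≤ (Fintype.card D - 1) * b := by
  classical
  rw [← count_lines']
  refine (Finset.sum_le_card_nsmul _ _ b (fun y hy => h y (by simpa using hy))).trans ?_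
  rw [Finset.filter_ne' Finset.univ, Finset.card_erase_of_mem (Finset.mem_univ _),
    Finset.card_univ, smul_eq_mul]

lemma linePoly_mul {R : Type*} [CommRing R] {n : ℕ} (f g : MvPolynomial (Fin n) R)
    (u m : Fin n → R) : linePoly (f * g) u m = linePoly f u m * linePoly g u m := by
  simp [linePoly]

lemma linePoly_natDegree_le' {R : Type*} [CommRing R] {n : ℕ} (f : MvPolynomial (Fin n) R)
    (u m : Fin n → R) : (linePoly f u m).natDegree ≤ f.totalDegree := by
  rw [linePoly]
  have := MvPolynomial.aeval_natDegree_le (F := f) (m := f.totalDegree) (n := 1) le_rfl (fun j => Polynomial.C (u j) + Polynomial.X * Polynomial.C (m j)) ?_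
  · simpa using this
  · intro j
    compute_degree

lemma zeros_factor {F : Type*} [Field F] [Fintype F]
    (g c : MvPolynomial (Fin 2) F) (hcg : c ∣ g) 
    (hg : ∀ P d, d ≠ 0 → linePoly g P d ≠ 0) :
    {P : Fin 2 → F | eval P c = 0}.ncard
     ≤ (c.totalDegree - 1) * (Fintype.card F + 1) + 1 ∧ 
     (c.totalDegree = 0 → {P : Fin 2 → F | eval P c = 0}.ncard = 0) := by
  classical
  obtain ⟨e, rfl⟩ := hcg
  have hnz : ∀ P d, d ≠ 0 → linePoly c P d ≠ 0 := by
    intro P d hd h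
    apply hg P d hd
    rw [linePoly_mul, h, zero_mul]
  have hQ : 1 < Fintype.card F := Fintype.one_lt_card
  by_cases hP : ∃ P, eval P c = 0
  · obtain ⟨P, hP⟩ := hP
    have hroot : ∀ d : Fin 2 → F, d ≠ 0 → 
      {t : F | t ≠ 0 ∧ eval (P + t • d) c = 0}.ncard + 1 ≤ c.totalDegree := by
      intro d hd
      rw [ncard_setOf']
      have h1 : insert 0 (Finset.univ.filter (fun t : F => t ≠ 0 ∧ eval (P + t • d) c = 0)) ⊆ 
          (linePoly c P d).roots.toFinset := by
        intro t ht
        rw [Multiset.mem_toFinset, Polynomial.mem_roots (hnz P d hd), Polynomial.IsRoot, eval_linePoly]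
        rcases Finset.mem_insert.mp ht with h | h
        · simpa [h] using hP
        · exact (Finset.mem_filter.mp h).2.2
      have h2 := Finset.card_le_card h1
      rw [Finset.card_insert_of_notMem (by simp)] at h2
      exact h2.trans ((Multiset.toFinset_card_le _).trans ((Polynomial.card_roots' _).trans 
        (linePoly_natDegree_le' _ _ _)))
    have hd1 := hroot (fun _ => 1) (by intro h; have := congrFun h 0; simp at this)
    refine ⟨?_, by omega⟩
    have := count_lines_le (F := F) (fun w : Fin 2 → F => eval (P + w) c = 0) (c.totalDegree - 1)
      (fun y hy => by have := hroot y hy; omega)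
    rw [Fintype.card_fun, Fintype.card_fin] at this
    have hle : {w : Fin 2 → F | w ≠ 0 ∧ eval (P + w) c = 0}.ncard
       ≤ (c.totalDegree - 1) * (Fintype.card F + 1) := by
      have h3 : Fintype.card F ^ 2 - 1 = (Fintype.card F - 1) * (Fintype.card F + 1) := by
        have := Nat.sq_sub_sq (Fintype.card F) 1
        rw [one_pow] at this
        rw [this, mul_comm]
      rw [h3, mul_assoc] at this
      have := Nat.le_of_mul_le_mul_left this (by omega)
      rw [mul_comm]; exact this
    have hins : {P : Fin 2 → F | eval P c = 0} ⊆ 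
       insert P ((fun w => P + w) '' {w : Fin 2 → F | w ≠ 0 ∧ eval (P + w) c = 0}) := by
      intro R hR
      by_cases h : R = P
      · simp [h]
      · refine Set.mem_insert_of_mem _ ⟨R - P, ?_, by simp⟩
        simpa [sub_eq_zero, h] using hR
    have := Set.ncard_le_ncard hins (Set.toFinite _)
    have h4 := Set.ncard_insert_le P ((fun w => P + w) '' {w : Fin 2 → F | w ≠ 0 ∧ eval (P + w) c = 0})
    have h5 := Set.ncard_image_le (s := {w : Fin 2 → F | w ≠ 0 ∧ eval (P + w) c = 0}) (f := (fun w => P + w)) (Set.toFinite _)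
    omega
  · push Not at hP
    have : {P : Fin 2 → F | eval P c = 0} = ∅ := by
      ext P; simpa using hP P
    rw [this]; simp
end counting

section bez
variable {F : Type*} [Field F]

/-- directional derivative at a point -/
noncomputable def dirD (P τ : Fin 2 → F) : MvPolynomial (Fin 2) F →ₗ[F] F where
  toFun φ := τ 0 * eval P (pderiv 0 φ) + τ 1 * eval P (pderiv 1 φ)
  map_add' a b := by simp; ring
  map_smul' a b := by simp; ring

lemma dirD_apply (P τ : Fin 2 → F) (φ : MvPolynomial (Fin 2) F) :
    dirD P τ φ = τ 0 * eval P (pderiv 0 φ) + τ 1 * eval P (pderiv 1 φ) := rfl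

lemma dirD_mul (P τ : Fin 2 → F) (a b : MvPolynomial (Fin 2) F) :
    dirD P τ (a * b) = dirD P τ a * eval P b + eval P a * dirD P τ b := by
  simp only [dirD_apply, Derivation.leibniz, smul_eq_mul, map_add, map_mul]; ring

lemma dirD_X (P τ : Fin 2 → F) (i : Fin 2) : dirD P τ (X i) = τ i := by
  fin_cases i <;> simp [dirD_apply, pderiv_X]

lemma dirD_C (P τ : Fin 2 → F) (c : F) : dirD P τ (C c) = 0 := by
  simp [dirD_apply]

lemma dirD_pow_zero (P τ : Fin 2 → F) (a : MvPolynomial (Fin 2) F) (Q : ℕ) (hQ : (Q : F) = 0) :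
    dirD P τ (a ^ Q) = 0 := by
  simp [dirD_apply, hQ]

lemma bezout_points [Fintype F] (f2 c e h' : MvPolynomial (Fin 2) F) (he : e ≠ 0) (hh : h' ≠ 0)
    (hce : c * e = f2) (hch : c * h' = frobPoly (Fintype.card F) f2) (hr : IsRelPrime e h') :
    2 * {P : Fin 2 → F | eval P e = 0 ∧ eval P c ≠ 0}.ncard ≤ e.totalDegree * h'.totalDegree := by
  classical
  set T := {P : Fin 2 → F // eval P e = 0 ∧ eval P c ≠ 0} with hT
  have hQ0 : ((Fintype.card F : ℕ) : F) = 0 := FiniteField.cast_card_eq_zero F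
  have hτ : ∀ P : T, ∃ τ : Fin 2 → F, (∃ j, τ j ≠ 0) ∧ dirD P.1 τ e = 0 := by
    intro P
    by_cases h : eval P.1 (pderiv 0 e) = 0 ∧ eval P.1 (pderiv 1 e) = 0
    · exact ⟨fun _ => 1, ⟨0, by simp⟩, by simp [dirD_apply, h.1, h.2]⟩
    · refine ⟨![eval P.1 (pderiv 1 e), - eval P.1 (pderiv 0 e)], ?_, ?_⟩
      · by_cases h0 : eval P.1 (pderiv 0 e) = 0
        · exact ⟨0, by simpa [h0] using h⟩
        · exact ⟨1, by simpa using h0⟩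
      · simp [dirD_apply]; ring
  choose τ hτ0 hτe using hτ
  choose j hj using hτ0
  let L : MvPolynomial (Fin 2) F →ₗ[F] (T → F × F) :=
    LinearMap.pi (fun P => (aeval P.1 : MvPolynomial (Fin 2) F →ₐ[F] F).toLinearMap.prod (dirD P.1 (τ P)))
  have hL : ∀ φ P, L φ P = (eval P.1 φ, dirD P.1 (τ P) φ) := by
    intro φ P; simp [L, aeval_eq_eval]
  have key := bezout_bound e h' he hh hr L ?_ ?_ ?_
  · rw [Module.finrank_pi_fintype] at key
    simp only [Module.finrank_prod, Module.finrank_self, Finset.sum_const, Finset.card_univ, smul_eq_mul] at key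
    have : {P : Fin 2 → F | eval P e = 0 ∧ eval P c ≠ 0}.ncard = Fintype.card T := by
      rw [← Nat.card_coe_set_eq, Nat.card_eq_fintype_card]
      rfl
    rw [this]; linarith
  · intro y
    refine ⟨∑ P : T, (indicator P.1) ^ (Fintype.card F) * (C (y P).1 + C ((y P).2 * (τ P (j P))⁻¹) * (X (j P) - C (P.1 (j P)))), ?_⟩
    have hev : ∀ P P' : T, eval P'.1 (indicator P.1 ^ Fintype.card F) = if P' = P then 1 else 0 := by
      intro P P'
      split_ifs with h
      · rw [h, map_pow, eval_indicator_apply_eq_one, one_pow]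
      · rw [map_pow, eval_indicator_apply_eq_zero, zero_pow Fintype.card_ne_zero]
        intro h'; exact h (Subtype.ext h')
    funext P'
    rw [hL]
    ext
    · simp only [map_sum, map_mul, hev]
      rw [Finset.sum_eq_single P' (fun b _ hb => by rw [if_neg (Ne.symm hb), zero_mul]) (by simp)]
      simp
    · simp only [map_sum, dirD_mul, hev, dirD_pow_zero _ _ _ _ hQ0, map_add, map_sub, dirD_C, dirD_X]
      rw [Finset.sum_eq_single P' (fun b _ hb => by rw [if_neg (Ne.symm hb)]; simp) (by simp)]
      simp [hj]
  · intro a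
    funext P
    rw [hL, dirD_mul, map_mul, P.2.1, hτe]; simp
  · intro a
    funext P
    have h1 : eval P.1 h' = 0 := by
      have := congrArg (eval P.1) hch
      rw [map_mul] at this
      rw [frobPoly] at this
      simp [FiniteField.pow_card, P.2.2] at this
      exact this
    have h2 : dirD P.1 (τ P) h' = 0 := by
      have := congrArg (dirD P.1 (τ P)) hch
      rw [dirD_mul, h1, mul_zero, zero_add, frobPoly, map_add, dirD_mul, dirD_mul] at this
      simp only [dirD_pow_zero _ _ _ _ hQ0, dirD_X, map_sub, map_pow, eval_X, FiniteField.pow_card, sub_self, zero_mul, add_zero, zero_sub] at this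
      have h3 : dirD P.1 (τ P) f2 = 0 := by
        rw [← hce, dirD_mul, hτe, P.2.1]; simp
      rw [dirD_apply] at h3
      have h4 : eval P.1 c * dirD P.1 (τ P) h' = 0 := by
        rw [this]; linear_combination -h3
      exact (mul_eq_zero.mp h4).resolve_left P.2.2
    rw [hL, dirD_mul, map_mul, h1, h2]; simp
end bez

lemma plane_arith (q D M A B : ℕ) (hq : 3 ≤ q) (hDM : D + M = q + 1) (hD : 1 ≤ D)
    (hA : A ≤ (M - 1) * (q^2 + 1) + 1) (hA0 : M = 0 → A = 0) (hB : 2 * B ≤ D * (q^2 + D - 1)) :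
    A + B < q^3 := by
  rcases Nat.eq_zero_or_pos M with h | h
  · have hA2 := hA0 h
    rw [hA2, zero_add]
    have : D = q + 1 := by omega
    subst this
    rw [show q^2 + (q+1) - 1 = q^2 + q by omega] at hB
    nlinarith
  · obtain ⟨m, rfl⟩ : ∃ m, M = m + 1 := ⟨M - 1, by omega⟩
    obtain ⟨d, rfl⟩ : ∃ d, D = d + 1 := ⟨D - 1, by omega⟩
    have e : q = d + m + 1 := by omega
    simp only [Nat.add_sub_cancel] at hA
    rw [show q^2 + (d+1) - 1 = q^2 + d by omega] at hB
    have h1 : 2 * (A + B) ≤ 2 * (m * (q^2+1) + 1) + (d+1) * (q^2 + d) := by linarith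
    have h2 : 2 * (m * (q^2+1) + 1) + (d+1) * (q^2 + d) < 2 * q^3 := by
      zify at e ⊢
      have hm : (m : ℤ) = q - d - 1 := by linarith
      rw [hm]
      have hd : (0:ℤ) ≤ d := by positivity
      have hq' : (3:ℤ) ≤ q := by exact_mod_cast hq
      have hdq : (d:ℤ) + 1 ≤ q := by have : (0:ℤ) ≤ m := by positivity
                                     linarith
      nlinarith [mul_nonneg hd (show (0:ℤ) ≤ q^2 + 1 - d by nlinarith)]
    linarith

lemma plane_lemma {F : Type*} [Field F] [Fintype F] {n q : ℕ} (hcard : Fintype.card F = q ^ 2)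
    (hqF : (q : F) = 0) (hq : 3 ≤ q)
    {f : MvPolynomial (Fin n) F} (hf : f.IsHomogeneous (q+1)) (u v : Fin n → F)
    (huv : ∀ s t : F, ¬ (s = 0 ∧ t = 0) → eval (s • u + t • v) f ≠ 0) (w : Fin n → F) :
    {P : Fin 2 → F | eval (w + P 0 • u + P 1 • v) f = 0}.ncard < q ^ 3 := by
  classical
  set f2 := planePoly f w u v with hf2
  have hnd := not_dvd_frobPoly hcard hqF (by omega) hf w u v huv
  rw [← hf2] at hnd
  have hdeg : f2.totalDegree ≤ q + 1 := totalDegree_planePoly hf w u v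
  have hline : ∀ P d : Fin 2 → F, d ≠ 0 → (linePoly f2 P d).coeff (q+1) ≠ 0 := by
    intro P d hd
    rw [hf2, linePoly_planePoly, linePoly_coeff_top hf]
    apply huv
    rintro ⟨h0, h1⟩
    apply hd
    funext i; fin_cases i <;> simp [h0, h1]
  have hdeg' : f2.totalDegree = q + 1 := by
    apply le_antisymm hdeg
    refine le_trans ?_ (linePoly_natDegree_le' f2 0 (fun _ => 1))
    apply Polynomial.le_natDegree_of_ne_zero
    apply hline
    intro h; have := congrFun h 0; simp at this
  have hf20 : f2 ≠ 0 := by rintro h; rw [h] at hdeg'; simp at hdeg'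
  have hh20 : frobPoly (q^2) f2 ≠ 0 := by intro h; rw [h] at hnd; exact hnd (dvd_zero _)
  obtain ⟨e, h', c, hrel, hce, hch⟩ := UniqueFactorizationMonoid.exists_reduced_factors f2 hf20 (frobPoly (q^2) f2)
  have hc0 : c ≠ 0 := by rintro rfl; exact hf20 (by rw [← hce, zero_mul])
  have he0 : e ≠ 0 := by rintro rfl; exact hf20 (by rw [← hce, mul_zero])
  have hh0 : h' ≠ 0 := by rintro rfl; exact hh20 (by rw [← hch, mul_zero])
  have hd1 : c.totalDegree + e.totalDegree = q + 1 := by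
    rw [← totalDegree_mul_of_isDomain hc0 he0, hce, hdeg']
  have hd2 : c.totalDegree + h'.totalDegree ≤ q^2 + q := by
    rw [← totalDegree_mul_of_isDomain hc0 hh0, hch]
    exact frobPoly_totalDegree (by nlinarith) hdeg
  have hD : 1 ≤ e.totalDegree := by
    by_contra h
    have h0 : e.totalDegree = 0 := by omega
    rw [totalDegree_eq_zero_iff_eq_C] at h0
    set k := coeff 0 e
    have hk : k ≠ 0 := by intro h; rw [h] at h0; simp at h0; exact he0 h0
    apply hnd
    refine ⟨C k⁻¹ * h', ?_⟩
    rw [← hch, ← hce, h0]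
    have : (C k * C k⁻¹ : MvPolynomial (Fin 2) F) = 1 := by rw [← C_mul, mul_inv_cancel₀ hk, C_1]
    linear_combination (- c * h') * this
  have hB := bezout_points f2 c e h' he0 hh0 hce (by rw [hcard]; exact hch) hrel
  have hA := zeros_factor f2 c ⟨e, hce.symm⟩ (fun P d hd h => hline P d hd (by rw [h]; simp))
  rw [hcard] at hA
  have hBB : 2 * {P : Fin 2 → F | eval P e = 0 ∧ eval P c ≠ 0}.ncard ≤ e.totalDegree * (q^2 + e.totalDegree - 1) := by
    refine hB.trans (Nat.mul_le_mul_left _ ?_)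
    omega
  refine lt_of_le_of_lt ?_ (plane_arith q e.totalDegree c.totalDegree _ _ hq (by omega) hD hA.1 hA.2 hBB)
  refine (Set.ncard_le_ncard ?_ (Set.toFinite _)).trans (Set.ncard_union_le _ _)
  intro P hP
  have : eval P f2 = 0 := by rw [hf2, eval_planePoly]; exact hP
  rw [← hce, map_mul] at this
  by_cases h : eval P c = 0
  · left; exact h
  · right; exact ⟨(mul_eq_zero.mp this).resolve_left h, h⟩

section fib
variable {V E : Type*} [AddCommGroup V] [Fintype V] [Fintype E]

lemma fib_sum (φ : E → V) (A : Set V) [DecidablePred (· ∈ A)] (hA : ∀ e v, v + φ e ∈ A ↔ v ∈ A) (P : V → Prop) :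
    ∑ v ∈ Finset.univ.filter (· ∈ A), {e | P (v + φ e)}.ncard
      = Fintype.card E * {v | v ∈ A ∧ P v}.ncard := by
  classical
  simp_rw [ncard_setOf', Finset.card_filter]
  rw [Finset.sum_comm]
  have : ∀ e ∈ (Finset.univ : Finset E), ∑ v ∈ Finset.univ.filter (· ∈ A), (if P (v + φ e) then 1 else 0)
      = ∑ v, (if v ∈ A ∧ P v then 1 else 0) := by
    intro e _
    rw [← Finset.card_filter, ← Finset.card_filter, Finset.filter_filter]
    apply Finset.card_bij (fun v _ => v + φ e)
    · intro v hv; simpa [hA] using hv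
    · intro a _ b _ h; exact add_right_cancel h
    · intro w hw
      refine ⟨w - φ e, ?_, by simp⟩
      have := hA e (w - φ e)
      simp only [sub_add_cancel] at this
      simpa [← this] using hw
  rw [Finset.sum_congr rfl this, Finset.sum_const, smul_eq_mul, Finset.card_univ]

lemma fib_le (φ : E → V) (A : Set V) (hA : ∀ e v, v + φ e ∈ A ↔ v ∈ A) (P : V → Prop) (k : ℕ)
    (h : ∀ v ∈ A, {e | P (v + φ e)}.ncard ≤ k) :
    Fintype.card E * {v | v ∈ A ∧ P v}.ncard ≤ A.ncard * k := by
  classical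
  rw [← fib_sum φ A hA P]
  refine (Finset.sum_le_card_nsmul _ _ k (fun v hv => h v (by simpa using hv))).trans ?_
  rw [← ncard_setOf', smul_eq_mul]; rfl

lemma fib_eq (φ : E → V) (A : Set V) (hA : ∀ e v, v + φ e ∈ A ↔ v ∈ A) (P : V → Prop) (k : ℕ)
    (h : ∀ v ∈ A, {e | P (v + φ e)}.ncard = k) :
    Fintype.card E * {v | v ∈ A ∧ P v}.ncard = A.ncard * k := by
  classical
  rw [← fib_sum φ A hA P]
  rw [Finset.sum_congr rfl (fun v hv => h v (by simpa using hv)), Finset.sum_const, ← ncard_setOf', smul_eq_mul]; rfl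

lemma fib_max (φ : E → V) (A : Set V) (hA : ∀ e v, v + φ e ∈ A ↔ v ∈ A) (P : V → Prop) (k : ℕ)
    (h : ∀ v ∈ A, {e | P (v + φ e)}.ncard ≤ k)
    (heq : Fintype.card E * {v | v ∈ A ∧ P v}.ncard = A.ncard * k) :
    ∀ v ∈ A, {e | P (v + φ e)}.ncard = k := by
  classical
  rw [← fib_sum φ A hA P] at heq
  have h2 : ∑ v ∈ Finset.univ.filter (· ∈ A), k = A.ncard * k := by
    rw [Finset.sum_const, ← ncard_setOf', smul_eq_mul]; rfl
  rw [← h2, Finset.sum_eq_sum_iff_of_le (fun v hv => h v (by simpa using hv))] at heq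
  intro v hv
  exact heq v (by simpa using hv)

lemma fib_min (φ : E → V) (A : Set V) (hA : ∀ e v, v + φ e ∈ A ↔ v ∈ A) (P : V → Prop) (k : ℕ)
    (h : ∀ v ∈ A, k ≤ {e | P (v + φ e)}.ncard)
    (heq : Fintype.card E * {v | v ∈ A ∧ P v}.ncard = A.ncard * k) :
    ∀ v ∈ A, {e | P (v + φ e)}.ncard = k := by
  classical
  rw [← fib_sum φ A hA P] at heq
  have h2 : ∑ v ∈ Finset.univ.filter (· ∈ A), k = A.ncard * k := by
    rw [Finset.sum_const, ← ncard_setOf', smul_eq_mul]; rfl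
  rw [← h2, eq_comm, Finset.sum_eq_sum_iff_of_le (fun v hv => h v (by simpa using hv))] at heq
  intro v hv
  exact (heq v (by simpa using hv)).symm
end fib

section lin
variable {F : Type*} [Field F] {n : ℕ}

lemma hom_one_add {R : Type*} [CommRing R] {g : MvPolynomial (Fin n) R} (hg : g.IsHomogeneous 1) (u v : Fin n → R) :
    eval (u + v) g = eval u g + eval v g := by
  have h1 := eval_linePoly g u v 1
  rw [one_smul] at h1
  have h0 := eval_linePoly g u v 0
  rw [zero_smul, add_zero] at h0
  have hd := linePoly_natDegree_le hg u v
  have hc := linePoly_coeff_top hg u v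
  rw [← h1, ← h0, ← hc]
  rw [Polynomial.eval_eq_sum_range' (n := 2) (by omega), Polynomial.eval_eq_sum_range' (n := 2) (by omega)]
  simp [Finset.sum_range_succ]

/-- the polar linear form: the coefficient of `t^q` in `f (v + t y)` -/
noncomputable def phiL {q : ℕ} {f : MvPolynomial (Fin n) F} (hf : f.IsHomogeneous (q+1)) (y : Fin n → F) :
    (Fin n → F) →ₗ[F] F where
  toFun v := (linePoly f v y).coeff q
  map_add' u v := by
    obtain ⟨g, hg, -, hc⟩ := linePoly_coeff hf y
    rw [hc, hc, hc, hom_one_add (hg q 1 rfl)]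
  map_smul' c v := by
    obtain ⟨g, hg, -, hc⟩ := linePoly_coeff hf y
    rw [hc, hc, hom_eval_smul (hg q 1 rfl)]; simp

lemma phiL_apply {q : ℕ} {f : MvPolynomial (Fin n) F} (hf : f.IsHomogeneous (q+1)) (y v : Fin n → F) :
    phiL hf y v = (linePoly f v y).coeff q := rfl

lemma linePoly_roots_le (f : MvPolynomial (Fin n) F) (u y : Fin n → F) (k : ℕ)
    (hd : (linePoly f u y).natDegree ≤ k) (h0 : linePoly f u y ≠ 0) :
    {t : F | eval (u + t • y) f = 0}.ncard ≤ k := by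
  classical
  have : {t : F | eval (u + t • y) f = 0} = ↑((linePoly f u y).roots.toFinset) := by
    ext t
    simp [h0, eval_linePoly]
  rw [this, Set.ncard_coe_finset]
  exact (Multiset.toFinset_card_le _).trans ((Polynomial.card_roots' _).trans hd)

lemma natDegree_le_of_coeff {R : Type*} [Semiring R] (p : Polynomial R) (k : ℕ) (h : p.natDegree ≤ k + 1) (hc : p.coeff (k+1) = 0) :
    p.natDegree ≤ k := by
  rw [Polynomial.natDegree_le_iff_coeff_eq_zero] at h ⊢
  intro m hm
  rcases eq_or_lt_of_le (Nat.succ_le_of_lt hm) with h1 | h1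
  · rw [← h1]; exact hc
  · exact h m h1

lemma linePoly_eq_zero [Fintype F] {f : MvPolynomial (Fin n) F} {u y : Fin n → F}
    (hd : (linePoly f u y).natDegree < Fintype.card F) (h : ∀ t : F, eval (u + t • y) f = 0) :
    linePoly f u y = 0 := by
  by_contra h0
  have := linePoly_roots_le f u y _ le_rfl h0
  have h2 : {t : F | eval (u + t • y) f = 0} = Set.univ := by ext t; simp [h]
  rw [h2, Set.ncard_univ, Nat.card_eq_fintype_card] at this
  omega
end lin

/-- every 2-dimensional subspace contains a nonzero zero -/
lemma blocking {F : Type*} [Field F] [Fintype F] {q : ℕ} (hcard : Fintype.card F = q ^ 2)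
    (hqF : (q : F) = 0) (hq : 3 ≤ q)
    {f : MvPolynomial (Fin 7) F} (hf : f.IsHomogeneous (q+1))
    (hV : {v : Fin 7 → F | eval v f = 0}.ncard + q^7 = q^13 + q^6) (u v : Fin 7 → F) :
    ∃ s t : F, ¬ (s = 0 ∧ t = 0) ∧ eval (s • u + t • v) f = 0 := by
  classical
  by_contra hcon
  push Not at hcon
  have h1 := fib_le (fun P : Fin 2 → F => P 0 • u + P 1 • v) Set.univ (by simp)
    (fun w : Fin 7 → F => eval w f = 0) (q^3 - 1) (by
      intro w _
      have := plane_lemma hcard hqF hq hf u v (fun s t h => hcon s t (by tauto)) w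
      simp only [add_assoc] at this
      omega)
  rw [Set.ncard_univ, Nat.card_eq_fintype_card, Fintype.card_fun, Fintype.card_fun, hcard] at h1
  simp only [Fintype.card_fin, Set.mem_univ, true_and] at h1
  set z := {v : Fin 7 → F | eval v f = 0}.ncard
  have h3 : 1 ≤ q^3 := Nat.one_le_pow _ _ (by omega)
  zify [h3] at h1 hV
  have hz : (z:ℤ) = q^13 + q^6 - q^7 := by linarith
  rw [hz] at h1
  have h5 : (q:ℤ)^14 + q^10 ≤ q^11 := by nlinarith
  have h6 : (q:ℤ)^11 ≤ q^14 := by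
    apply pow_le_pow_right₀ <;> [exact_mod_cast (by omega : 1 ≤ q); norm_num]
  have h7 : (0:ℤ) < q^10 := by positivity
  linarith

section step3
variable {F : Type*} [Field F] [Fintype F] {q : ℕ}

lemma ncard_submodule {V : Type*} [AddCommGroup V] [Module F V] [Fintype V] (W : Submodule F V) :
    (W : Set V).ncard = Fintype.card F ^ finrank F W := by
  rw [← Nat.card_coe_set_eq, ← Nat.card_eq_fintype_card]
  exact Module.natCard_eq_pow_finrank (K := F) (V := W)

lemma hom_smul_zero {n : ℕ} {f : MvPolynomial (Fin n) F} (hf : f.IsHomogeneous (q+1)) (c : F) {v : Fin n → F}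
    (h : eval v f = 0) : eval (c • v) f = 0 := by
  rw [hom_eval_smul hf, h, mul_zero]

lemma hom_smul_zero_iff {n : ℕ} {f : MvPolynomial (Fin n) F} (hf : f.IsHomogeneous (q+1)) {c : F} (hc : c ≠ 0) {v : Fin n → F} :
    eval (c • v) f = 0 ↔ eval v f = 0 := by
  rw [hom_eval_smul hf]; simp [hc]

lemma exists_pi (hcard : Fintype.card F = q ^ 2) (hq : 3 ≤ q)
    {f : MvPolynomial (Fin 7) F} (hf : f.IsHomogeneous (q+1))
    (hb : ∀ u v : Fin 7 → F, ∃ s t : F, ¬ (s = 0 ∧ t = 0) ∧ eval (s • u + t • v) f = 0)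
    (Sg : Submodule F (Fin 7 → F)) (hS4 : finrank F Sg = 4)
    (hSz : {v | v ∈ (Sg : Set (Fin 7 → F)) ∧ eval v f = 0}.ncard = q^6) :
    ∃ π : Submodule F (Fin 7 → F), finrank F π = 3 ∧ π ≤ Sg ∧ ∀ v ∈ Sg, (eval v f = 0 ↔ v ∈ π) := by
  classical
  have key : ∀ P ∈ Sg, eval P f ≠ 0 → ∀ y ∈ Sg, {t : F | eval (y + t • P) f = 0}.ncard = 1 := by
    intro P hP hPf
    refine fib_min (fun t : F => t • P) (Sg : Set (Fin 7 → F)) ?_ (fun v => eval v f = 0) 1 ?_ ?_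
    · intro t v
      exact Submodule.add_mem_iff_left _ (Sg.smul_mem t hP)
    · intro y hy
      rw [Nat.one_le_iff_ne_zero, Ne, Set.ncard_eq_zero (Set.toFinite _), ← Ne, ← Set.nonempty_iff_ne_empty]
      obtain ⟨s, t, hst, h0⟩ := hb y P
      have hs : s ≠ 0 := by
        rintro rfl
        have ht : t ≠ 0 := by simpa using hst
        rw [zero_smul, zero_add, hom_smul_zero_iff hf ht] at h0
        exact hPf h0
      refine ⟨s⁻¹ * t, ?_⟩
      have := hom_smul_zero hf s⁻¹ h0
      rw [smul_add, smul_smul, smul_smul, inv_mul_cancel₀ hs, one_smul] at this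
      exact this
    · rw [hSz, ncard_submodule, hS4, hcard]; ring
  have hsub : ∀ a b, a ∈ Sg → b ∈ Sg → eval a f = 0 → eval b f = 0 → eval (a - b) f = 0 := by
    intro a b ha hb h1 h2
    by_contra h
    have := key (a - b) (Sg.sub_mem ha hb) h b hb
    rw [Set.ncard_eq_one] at this
    obtain ⟨t, ht⟩ := this
    have m0 : (0 : F) ∈ {t : F | eval (b + t • (a - b)) f = 0} := by simpa using h2
    have m1 : (1 : F) ∈ {t : F | eval (b + t • (a - b)) f = 0} := by simpa using h1
    rw [ht] at m0 m1
    rw [Set.mem_singleton_iff] at m0 m1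
    exact zero_ne_one (m0.trans m1.symm)
  have h0 : eval (0 : Fin 7 → F) f = 0 := hom_eval_zero hf (by omega)
  let π : Submodule F (Fin 7 → F) :=
    { carrier := {v | v ∈ (Sg : Set (Fin 7 → F)) ∧ eval v f = 0}
      zero_mem' := ⟨Sg.zero_mem, h0⟩
      add_mem' := by
        rintro a b ⟨ha, ha'⟩ ⟨hb, hb'⟩
        refine ⟨Sg.add_mem ha hb, ?_⟩
        have h1 := hsub 0 b Sg.zero_mem hb h0 hb'
        have := hsub a (0 - b) ha (Sg.sub_mem Sg.zero_mem hb) ha' h1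
        simpa using this
      smul_mem' := by
        rintro c a ⟨ha, ha'⟩
        exact ⟨Sg.smul_mem c ha, hom_smul_zero hf c ha'⟩ }
  refine ⟨π, ?_, fun v hv => hv.1, fun v hv => ⟨fun h => ⟨hv, h⟩, fun h => h.2⟩⟩
  have h1 := ncard_submodule π
  have h2 : (π : Set (Fin 7 → F)).ncard = q^6 := hSz
  rw [h2, hcard, ← pow_mul] at h1
  have := Nat.pow_right_injective (by omega : 2 ≤ q) h1
  omega

/-- phi vanishes on totally singular subspaces -/
lemma phiL_pi (hcard : Fintype.card F = q ^ 2) (hq : 3 ≤ q)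
    {f : MvPolynomial (Fin 7) F} (hf : f.IsHomogeneous (q+1)) (π : Submodule F (Fin 7 → F))
    (hπ : ∀ v ∈ π, eval v f = 0) {x y : Fin 7 → F} (hx : x ∈ π) (hy : y ∈ π) : phiL hf y x = 0 := by
  rw [phiL_apply, linePoly_eq_zero]
  · simp
  · have := linePoly_natDegree_le hf x y
    rw [hcard]; nlinarith
  · intro t
    exact hπ _ (π.add_mem hx (π.smul_mem t hy))

lemma linePoly_deg_q {f : MvPolynomial (Fin 7) F} (hf : f.IsHomogeneous (q+1)) (u : Fin 7 → F) {y : Fin 7 → F} (hy : eval y f = 0) :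
    (linePoly f u y).natDegree ≤ q :=
  natDegree_le_of_coeff _ _ (linePoly_natDegree_le hf u y) (by rw [linePoly_coeff_top hf, hy])

lemma exists_nonzero_coset {f : MvPolynomial (Fin 7) F} (hf : f.IsHomogeneous (q+1))
    (hns : ∀ W : Submodule F (Fin 7 → F), finrank F W = 4 → ∃ v ∈ W, eval v f ≠ 0)
    (π : Submodule F (Fin 7 → F)) (h3 : finrank F π = 3)
    (hπ : ∀ v ∈ π, eval v f = 0) {c : Fin 7 → F} (hc : c ∉ π) :
    ∃ x ∈ π, eval (c + x) f ≠ 0 := by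
  by_contra hcon
  push Not at hcon
  have h4 : finrank F ↥(π ⊔ Submodule.span F {c}) = 4 := by
    have := Submodule.finrank_sup_add_finrank_inf_eq π (Submodule.span F {c})
    have hinf : π ⊓ Submodule.span F {c} = ⊥ := by
      rw [← disjoint_iff]
      exact (Submodule.disjoint_span_singleton' (by rintro rfl; exact hc π.zero_mem)).mpr hc
    rw [hinf, finrank_bot, finrank_span_singleton (by rintro rfl; exact hc π.zero_mem)] at this
    omega
  obtain ⟨v, hv, hvf⟩ := hns _ h4
  apply hvf
  obtain ⟨x, hx, w, hw, rfl⟩ := Submodule.mem_sup.mp hv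
  obtain ⟨s, rfl⟩ := Submodule.mem_span_singleton.mp hw
  by_cases hs : s = 0
  · rw [hs, zero_smul, add_zero]; exact hπ x hx
  · have := hom_smul_zero hf s (hcon (s⁻¹ • x) (π.smul_mem _ hx))
    rwa [smul_add, smul_smul, mul_inv_cancel₀ hs, one_smul, add_comm] at this

lemma N_upper (hcard : Fintype.card F = q ^ 2) (hq : 3 ≤ q)
    {f : MvPolynomial (Fin 7) F} (hf : f.IsHomogeneous (q+1))
    (hns : ∀ W : Submodule F (Fin 7 → F), finrank F W = 4 → ∃ v ∈ W, eval v f ≠ 0)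
    (π : Submodule F (Fin 7 → F)) (h3 : finrank F π = 3)
    (hπ : ∀ v ∈ π, eval v f = 0) {c : Fin 7 → F} (hc : c ∉ π) :
    {x : π | eval (c + (x : Fin 7 → F)) f = 0}.ncard ≤ q^5 := by
  classical
  have hcardπ : Fintype.card π = q^6 := by
    rw [← Nat.card_eq_fintype_card, Module.natCard_eq_pow_finrank (K := F), h3, Nat.card_eq_fintype_card, hcard]; ring
  by_cases h : ∃ y ∈ π, phiL hf y c ≠ 0
  · obtain ⟨y, hy, hyc⟩ := h
    have := fib_le (fun t : F => t • (⟨y, hy⟩ : π)) Set.univ (by simp) (fun x : π => eval (c + (x : Fin 7 → F)) f = 0) q (by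
      rintro ⟨x, hx⟩ _
      have h1 := linePoly_roots_le f (c + x) y q (linePoly_deg_q hf _ (hπ y hy)) (by
        intro h0
        apply hyc
        have h2 := (phiL hf y).map_add c x
        rw [phiL_pi hcard hq hf π hπ hx hy, phiL_apply, h0] at h2
        simpa using h2.symm)
      simpa [add_assoc] using h1)
    rw [Set.ncard_univ, Nat.card_eq_fintype_card, hcardπ, hcard] at this
    simp only [Set.mem_univ, true_and] at this
    rw [show q^6 * q = q^2 * q^5 by ring] at this
    exact Nat.le_of_mul_le_mul_left this (by positivity)
  · push Not at h
    obtain ⟨x0, hx0, hne⟩ := exists_nonzero_coset hf hns π h3 hπ hc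
    have h1 := count_lines_le (F := F) (fun w : π => eval (c + x0 + (w : Fin 7 → F)) f = 0) (q - 1) (by
      rintro ⟨y, hy⟩ _
      refine (Set.ncard_le_ncard (t := {t : F | eval (c + x0 + t • y) f = 0}) ?_ (Set.toFinite _)).trans ?_
      · rintro t ⟨_, ht⟩; simpa using ht
      · apply linePoly_roots_le
        · apply natDegree_le_of_coeff
          · rw [Nat.sub_add_cancel (by omega)]; exact linePoly_deg_q hf _ (hπ y hy)
          · rw [Nat.sub_add_cancel (by omega)]
            have := (phiL hf y).map_add c x0
            rw [phiL_pi hcard hq hf π hπ hx0 hy, h y hy, phiL_apply] at this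
            simpa using this
        · intro h0
          have := eval_linePoly f (c+x0) y 0
          rw [h0, zero_smul, add_zero] at this
          exact hne (by simpa using this.symm))
    have h2 : {x : π | eval (c + (x : Fin 7 → F)) f = 0}.ncard ≤ {w : π | w ≠ 0 ∧ eval (c + x0 + (w : Fin 7 → F)) f = 0}.ncard := by
      apply Set.ncard_le_ncard_of_injOn (fun x : π => x - ⟨x0, hx0⟩)
      · intro x hx
        refine ⟨?_, ?_⟩
        · intro h; rw [sub_eq_zero] at h; apply hne
          have hx' : eval (c + (x : Fin 7 → F)) f = 0 := hx
          rw [h] at hx'; exact hx'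
        · have hx' : eval (c + (x : Fin 7 → F)) f = 0 := hx
          simpa using hx'
      · intro a _ b _ h; exact sub_left_injective h
    rw [hcard, hcardπ] at h1
    set N := {x : π | eval (c + (x : Fin 7 → F)) f = 0}.ncard
    have h3 : (q^2 - 1) * N ≤ (q^6 - 1) * (q - 1) := (Nat.mul_le_mul_left _ h2).trans h1
    have e1 : 1 ≤ q^2 := Nat.one_le_pow _ _ (by omega)
    have e2 : 1 ≤ q^6 := Nat.one_le_pow _ _ (by omega)
    zify [e1, e2, (by omega : 1 ≤ q)] at h3 ⊢
    have hq' : (3:ℤ) ≤ q := by exact_mod_cast hq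
    have h4 : ((q:ℤ)^2 - 1) * N ≤ ((q:ℤ)^2 - 1) * ((q^4+q^2+1) * (q-1)) := by nlinarith
    have h5 := le_of_mul_le_mul_left h4 (by nlinarith)
    have h6 : ((q:ℤ)^4+q^2+1) * (q-1) ≤ q^5 := by
      have : ((q:ℤ)^4+q^2+1) * (q-1) = q^5 - (q^3 * (q - 1) + q * (q-1) + 1) := by ring
      rw [this]
      have a1 : 0 ≤ (q:ℤ)^3 * (q-1) := by apply mul_nonneg; positivity; linarith
      have a2 : 0 ≤ (q:ℤ) * (q-1) := by apply mul_nonneg; positivity; linarith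
      linarith
    linarith

lemma N_exact (hcard : Fintype.card F = q ^ 2) (hq : 3 ≤ q)
    {f : MvPolynomial (Fin 7) F} (hf : f.IsHomogeneous (q+1))
    (hns : ∀ W : Submodule F (Fin 7 → F), finrank F W = 4 → ∃ v ∈ W, eval v f ≠ 0)
    (hV : {v : Fin 7 → F | eval v f = 0}.ncard + q^7 = q^13 + q^6)
    (Sg : Submodule F (Fin 7 → F)) (hS4 : finrank F Sg = 4)
    (π : Submodule F (Fin 7 → F)) (h3 : finrank F π = 3) (hπS : π ≤ Sg)
    (hπ : ∀ v ∈ Sg, (eval v f = 0 ↔ v ∈ π)) {c : Fin 7 → F} (hc : c ∉ Sg) :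
    {x : π | eval (c + (x : Fin 7 → F)) f = 0}.ncard = q^5 := by
  classical
  have hcardπ : Fintype.card π = q^6 := by
    rw [← Nat.card_eq_fintype_card, Module.natCard_eq_pow_finrank (K := F), h3, Nat.card_eq_fintype_card, hcard]; ring
  refine fib_max (fun x : π => (x : Fin 7 → F)) ((Sg : Set (Fin 7 → F))ᶜ) ?_ (fun v => eval v f = 0) (q^5) ?_ ?_ c hc
  · intro e v
    simp only [Set.mem_compl_iff, SetLike.mem_coe]
    rw [Submodule.add_mem_iff_left _ (hπS e.2)]
  · intro v hv
    exact N_upper hcard hq hf hns π h3 (fun w hw => (hπ w (hπS hw)).mpr hw) (fun h => hv (hπS h))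
  · rw [hcardπ]
    have e1 : {v : Fin 7 → F | v ∈ (Sg : Set (Fin 7 → F))ᶜ ∧ eval v f = 0}.ncard + q^7 = q^13 := by
      have h1 : {v : Fin 7 → F | v ∈ (Sg : Set (Fin 7 → F))ᶜ ∧ eval v f = 0} = {v | eval v f = 0} \ (π : Set (Fin 7 → F)) := by
        ext v
        simp only [Set.mem_ofPred_eq, Set.mem_sdiff, Set.mem_compl_iff, SetLike.mem_coe]
        constructor
        · rintro ⟨a, b⟩; exact ⟨b, fun h => a (hπS h)⟩
        · rintro ⟨a, b⟩; exact ⟨fun h => b ((hπ v h).mp a), a⟩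
      have h2 := Set.ncard_sdiff_add_ncard_of_subset (s := (π : Set (Fin 7 → F))) (t := {v | eval v f = 0})
        (fun v hv => (hπ v (hπS hv)).mpr hv) (Set.toFinite _)
      rw [← h1, ncard_submodule, h3, hcard, ← pow_mul] at h2
      simp only [Nat.reduceMul] at h2
      omega
    have e2 : ((Sg : Set (Fin 7 → F))ᶜ).ncard + q^8 = q^14 := by
      have := Set.ncard_add_ncard_compl (Sg : Set (Fin 7 → F))
      rw [ncard_submodule, hS4, hcard, Nat.card_eq_fintype_card, Fintype.card_fun, hcard, Fintype.card_fin, ← pow_mul, ← pow_mul] at this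
      simp only [Nat.reduceMul] at this
      omega
    set a := {v : Fin 7 → F | v ∈ (Sg : Set (Fin 7 → F))ᶜ ∧ eval v f = 0}.ncard
    set b := ((Sg : Set (Fin 7 → F))ᶜ).ncard
    zify at e1 e2 ⊢
    have ha : (a:ℤ) = q^13 - q^7 := by linarith
    have hb : (b:ℤ) = q^14 - q^8 := by linarith
    rw [ha, hb]; ring
end step3

section comb

lemma fam_le {V E : Type*} [Fintype V] [Fintype E] (σ : E → Equiv.Perm V) (A : Set V)
    (hA : ∀ e v, σ e v ∈ A ↔ v ∈ A) (P : V → Prop) (k : ℕ)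
    (h : ∀ v ∈ A, {e | P (σ e v)}.ncard ≤ k) :
    Fintype.card E * {v | v ∈ A ∧ P v}.ncard ≤ A.ncard * k := by
  classical
  have hs : ∑ v ∈ Finset.univ.filter (· ∈ A), {e | P (σ e v)}.ncard
      = Fintype.card E * {v | v ∈ A ∧ P v}.ncard := by
    simp_rw [ncard_setOf', Finset.card_filter]
    rw [Finset.sum_comm]
    have : ∀ e ∈ (Finset.univ : Finset E), ∑ v ∈ Finset.univ.filter (· ∈ A), (if P (σ e v) then 1 else 0)
        = ∑ v, (if v ∈ A ∧ P v then 1 else 0) := by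
      intro e _
      rw [← Finset.card_filter, ← Finset.card_filter, Finset.filter_filter]
      apply Finset.card_bij (fun v _ => σ e v)
      · intro v hv; simpa [hA] using hv
      · intro a _ b _ h; exact (σ e).injective h
      · intro w hw
        refine ⟨(σ e).symm w, ?_, by simp⟩
        have := hA e ((σ e).symm w)
        simp only [Equiv.apply_symm_apply] at this
        simpa [← this] using hw
    rw [Finset.sum_congr rfl this, Finset.sum_const, smul_eq_mul, Finset.card_univ]
  rw [← hs]
  refine (Finset.sum_le_card_nsmul _ _ k (fun v hv => h v (by simpa using hv))).trans ?_
  rw [← ncard_setOf', smul_eq_mul]; rfl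

/-- a plane with a point off the set has at most `k (Q+1)` points if lines through that point
have at most `k` -/
lemma plane_count {F : Type*} [Field F] [Fintype F] (P : F × F → Prop) (k : ℕ) (O : F × F)
    (hO : ¬ P O) (h : ∀ y : F × F, {t : F | P (O + t • y)}.ncard ≤ k) :
    {x | P x}.ncard ≤ k * (Fintype.card F + 1) := by
  have h1 := count_lines_le (F := F) (fun w => P (O + w)) k (by
    intro y _
    refine (Set.ncard_le_ncard ?_ (Set.toFinite _)).trans (h y)
    exact fun t ht => ht.2)
  have hQ : 1 < Fintype.card F := Fintype.one_lt_card
  have h3 : Fintype.card (F × F) - 1 = (Fintype.card F - 1) * (Fintype.card F + 1) := by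
    rw [Fintype.card_prod]
    have := Nat.mul_self_sub_mul_self_eq (Fintype.card F) 1
    rw [mul_comm (Fintype.card F - 1), ← this]
  rw [h3, mul_assoc] at h1
  have h2 := Nat.le_of_mul_le_mul_left h1 (by omega)
  have h4 : {x | P x}.ncard ≤ {w | w ≠ 0 ∧ P (O + w)}.ncard := by
    apply Set.ncard_le_ncard_of_injOn (fun x => x - O)
    · intro x hx
      refine ⟨?_, by simpa using hx⟩
      intro h; rw [sub_eq_zero] at h; exact hO (h ▸ hx)
    · intro a _ b _ h; exact sub_left_injective h
  calc _ ≤ _ := h4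
    _ ≤ _ := h2
    _ = _ := mul_comm _ _

lemma full_plane {F E : Type*} [Field F] [Fintype F] [AddCommGroup E] [Module F E] [Fintype E] {q : ℕ}
    (hcard : Fintype.card F = q^2) (hq : 3 ≤ q) (hE : finrank F E = 3) (Z : E → Prop)
    (hline : ∀ x y : E, {t : F | Z (x + t • y)}.ncard ≤ q ∨ ∀ t : F, Z (x + t • y))
    (hN : {x | Z x}.ncard = q^5) :
    ∃ R y y2 : E, LinearIndependent F ![y, y2] ∧ ∀ a b : F, Z (R + (a • y + b • y2)) := by
  classical
  have hcE : Fintype.card E = q^6 := by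
    rw [← Nat.card_eq_fintype_card, Module.natCard_eq_pow_finrank (K := F), hE, Nat.card_eq_fintype_card, hcard]; ring
  have e1 : 1 ≤ q^2 := Nat.one_le_pow _ _ (by omega)
  have e6 : 1 ≤ q^6 := Nat.one_le_pow _ _ (by omega)
  have hq' : (3:ℤ) ≤ q := by exact_mod_cast hq
  obtain ⟨R, hR⟩ : ∃ R, Z R := by
    by_contra h
    push Not at h
    have : {x | Z x} = ∅ := by ext x; simp [h]
    rw [this, Set.ncard_empty] at hN
    have : 0 < q^5 := by positivity
    omega
  have htrans : {w | Z (R + w)}.ncard = q^5 := by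
    rw [← hN]
    apply Set.ncard_congr (fun w _ => R + w)
    · intro a ha; exact ha
    · intro a b _ _ h; exact add_left_cancel h
    · intro b hb; exact ⟨b - R, by simpa using hb, by simp⟩
  obtain ⟨y, hy0, hy⟩ : ∃ y : E, y ≠ 0 ∧ ∀ t : F, Z (R + t • y) := by
    by_contra hcon
    push Not at hcon
    have h1 := count_lines_le (F := F) (fun w : E => Z (R + w)) (q-1) (by
      intro y hy
      obtain ⟨t0, ht0⟩ := hcon y hy
      have h2 := (hline R y).resolve_right (by push Not; exact ⟨t0, ht0⟩)
      have h3 : {t : F | Z (R + t • y)} = insert 0 {t : F | t ≠ 0 ∧ Z (R + t • y)} := by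
        ext t
        by_cases h : t = 0 <;> simp [h, hR]
      rw [h3, Set.ncard_insert_of_notMem (by simp) (Set.toFinite _)] at h2
      omega)
    have h3 : {w | Z (R + w)} = insert 0 {w | w ≠ 0 ∧ Z (R + w)} := by
      ext t
      by_cases h : t = 0 <;> simp [h, hR]
    rw [h3, Set.ncard_insert_of_notMem (by simp) (Set.toFinite _)] at htrans
    rw [hcard, hcE] at h1
    set N := {w | w ≠ 0 ∧ Z (R + w)}.ncard
    zify [e1, e6, (by omega : 1 ≤ q)] at h1 htrans
    have hN' : (N:ℤ) = q^5 - 1 := by linarith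
    rw [hN'] at h1
    have h4 : ((q:ℤ)^2 - 1) * (q^5-1) ≤ ((q:ℤ)^2 - 1) * ((q^4+q^2+1) * (q-1)) := by nlinarith
    have h5 := le_of_mul_le_mul_left h4 (by nlinarith)
    have : (q:ℤ)^4 + q^2 ≤ q^3 + q := by nlinarith
    nlinarith [pow_pos (by linarith : (0:ℤ) < q) 3]
  by_contra hcon
  push Not at hcon
  set Y : Submodule F E := Submodule.span F {y} with hY
  have hYf : finrank F Y = 1 := finrank_span_singleton hy0
  let σ : F × Fˣ → Equiv.Perm E := fun p =>
    { toFun := fun v => p.1 • y + (p.2 : F) • v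
      invFun := fun w => ((p.2⁻¹ : Fˣ) : F) • (w - p.1 • y)
      left_inv := by intro v; simp [smul_smul]
      right_inv := by intro v; simp [smul_smul] }
  have h1 := fam_le σ ((Y : Set E)ᶜ) (by
    rintro ⟨a, b⟩ v
    simp only [Set.mem_compl_iff, SetLike.mem_coe, not_iff_not]
    change a • y + (b : F) • v ∈ Y ↔ v ∈ Y
    rw [Submodule.add_mem_iff_right _ (Y.smul_mem a (Submodule.mem_span_singleton_self y))]
    exact Submodule.smul_mem_iff _ b.ne_zero) (fun w => Z (R + w)) (q * (q^2+1) - q^2) (by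
    intro v hv
    have hli : LinearIndependent F ![y, v] := by
      rw [LinearIndependent.pair_iff' hy0]
      intro a ha
      exact hv (Submodule.mem_span_singleton.mpr ⟨a, ha⟩)
    obtain ⟨a0, b0, hab⟩ := hcon R y v hli
    have hpc := plane_count (fun p : F × F => Z (R + (p.1 • y + p.2 • v))) q (a0, b0) hab (by
      rintro ⟨d1, d2⟩
      have h2 := hline (R + (a0 • y + b0 • v)) (d1 • y + d2 • v)
      have h3 : ∀ t : F, R + (a0 • y + b0 • v) + t • (d1 • y + d2 • v)
        = R + (((a0, b0) + t • (d1, d2)).1 • y + ((a0, b0) + t • (d1, d2)).2 • v) := by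
        intro t; simp only [Prod.fst_add, Prod.snd_add, Prod.smul_fst, Prod.smul_snd, smul_eq_mul]; module
      simp_rw [h3] at h2
      refine h2.resolve_right ?_
      push Not
      exact ⟨0, by simpa using hab⟩)
    rw [hcard] at hpc
    have hsub : (fun p : F × Fˣ => ((p.1, (p.2 : F)) : F × F)) '' {e | Z (R + σ e v)} ∪ (fun a : F => ((a, 0) : F × F)) '' Set.univ
       ⊆ {p : F × F | Z (R + (p.1 • y + p.2 • v))} := by
      rintro p (⟨e, he, rfl⟩ | ⟨a, _, rfl⟩)
      · exact he
      · simpa using hy a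
    have h5 := Set.ncard_le_ncard hsub (Set.toFinite _)
    rw [Set.ncard_union_eq ?_ (Set.toFinite _) (Set.toFinite _), Set.ncard_image_of_injective, Set.ncard_image_of_injective,
      Set.ncard_univ, Nat.card_eq_fintype_card, hcard] at h5
    · omega
    · intro a b h; simpa using h
    · rintro ⟨a, a'⟩ ⟨b, b'⟩ h
      simp only [Prod.mk.injEq] at h
      exact Prod.ext h.1 (Units.ext h.2)
    · rw [Set.disjoint_left]
      rintro p ⟨e, he, rfl⟩ ⟨a, _, h⟩
      simp only [Prod.mk.injEq] at h
      exact e.2.ne_zero h.2.symm)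
  rw [Fintype.card_prod, Fintype.card_units, hcard] at h1
  have h2 : {v | v ∈ (Y : Set E)ᶜ ∧ Z (R + v)}.ncard + q^2 = q^5 := by
    have hs : {v | v ∈ (Y : Set E)ᶜ ∧ Z (R + v)} = {v | Z (R + v)} \ (Y : Set E) := by
      ext v; simp [and_comm]
    have h6 := Set.ncard_sdiff_add_ncard_of_subset (s := (Y : Set E)) (t := {v | Z (R + v)}) (by
      intro v hv
      obtain ⟨a, rfl⟩ := Submodule.mem_span_singleton.mp hv
      exact hy a) (Set.toFinite _)
    rw [← hs, htrans, ncard_submodule, hYf, hcard, pow_one] at h6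
    exact h6
  have h3 : ((Y : Set E)ᶜ).ncard + q^2 = q^6 := by
    have := Set.ncard_add_ncard_compl (Y : Set E)
    rw [ncard_submodule, hYf, hcard, pow_one, Nat.card_eq_fintype_card, hcE] at this
    omega
  set A := {v | v ∈ (Y : Set E)ᶜ ∧ Z (R + v)}.ncard
  set B := ((Y : Set E)ᶜ).ncard
  have e3 : q^2 ≤ q * (q^2+1) := by nlinarith
  zify [e1, e3] at h1 h2 h3
  have hA : (A:ℤ) = q^5 - q^2 := by linarith
  have hB : (B:ℤ) = q^6 - q^2 := by linarith
  rw [hA, hB] at h1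
  have hpos : (0:ℤ) < q^2 * (q^2 - 1) := by
    apply mul_pos; positivity; nlinarith
  have h4 : (q:ℤ)^2 * (q^2 - 1) * (q^5 - q^2) ≤ (q:ℤ)^2 * (q^2 - 1) * ((q^2+1) * (q * (q^2+1) - q^2)) := by
    calc _ ≤ _ := h1
      _ = _ := by ring
  have h5 := le_of_mul_le_mul_left h4 hpos
  have h6 : (q:ℤ)^4 ≤ 2 * q^3 + q := by nlinarith
  nlinarith [pow_pos (by linarith : (0:ℤ) < q) 3, pow_pos (by linarith : (0:ℤ) < q) 2]
end comb

section step5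
variable {F : Type*} [Field F] [Fintype F] {q : ℕ}

lemma coeff_vanish (hcard : Fintype.card F = q ^ 2) (hq : 3 ≤ q)
    {f : MvPolynomial (Fin 7) F} (hf : f.IsHomogeneous (q+1)) (π : Submodule F (Fin 7 → F))
    (hπ : ∀ v ∈ π, eval v f = 0) {y0 m O : Fin 7 → F} (hy0 : y0 ∈ π) (hm : m ∈ π) (K : Set F)
    (hK : ∀ s ∈ K, ∀ t : F, eval (O + s • y0 + t • m) f = 0) (i : ℕ) (hi : q < i + K.ncard) :
    (linePoly f O m).coeff i = 0 := by
  classical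
  have hbig : ∀ u y, (linePoly f u y).natDegree < Fintype.card F := by
    intro u y
    have := linePoly_natDegree_le hf u y
    rw [hcard]; nlinarith
  obtain ⟨g, hg, hg0, hc⟩ := linePoly_coeff hf m
  rw [hc]
  by_cases hi2 : q + 1 < i
  · rw [hg0 i hi2]; simp
  push Not at hi2
  obtain ⟨j, hj⟩ := Nat.exists_eq_add_of_le hi2
  have hgi := hg i j hj.symm
  have htop : (linePoly (g i) O y0).coeff j = 0 := by
    rw [linePoly_coeff_top hgi, ← hc, linePoly_eq_zero (hbig _ _)]
    · simp
    · intro t; exact hπ _ (π.add_mem hy0 (π.smul_mem t hm))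
  have hdeg := linePoly_natDegree_le hgi O y0
  have hzero : linePoly (g i) O y0 = 0 := by
    by_contra hne
    rcases j with _ | j
    · apply hne
      rw [Polynomial.eq_C_of_natDegree_le_zero hdeg, htop, map_zero]
    · have h1 := linePoly_roots_le (g i) O y0 j (natDegree_le_of_coeff _ _ hdeg htop) hne
      have h2 : K.ncard ≤ {t : F | eval (O + t • y0) (g i) = 0}.ncard := by
        apply Set.ncard_le_ncard _ (Set.toFinite _)
        intro s hs
        change eval (O + s • y0) (g i) = 0
        rw [← hc, linePoly_eq_zero (hbig _ _)]
        · simp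
        · exact hK s hs
      omega
  have := eval_linePoly (g i) O y0 0
  rw [hzero] at this
  simpa using this.symm

lemma coset_nonfull (hcard : Fintype.card F = q ^ 2) (hq : 3 ≤ q)
    {f : MvPolynomial (Fin 7) F} (hf : f.IsHomogeneous (q+1)) (π : Submodule F (Fin 7 → F))
    (hπ : ∀ v ∈ π, eval v f = 0) {y0 y y2 c : Fin 7 → F} (hy0 : y0 ∈ π) (hy : y ∈ π) (hy2 : y2 ∈ π)
    (K : Set F) (hKq : K.ncard ≤ q)
    (hK : ∀ s ∈ K, ∀ a b : F, eval (c + (s • y0 + (a • y + b • y2))) f = 0) (s : F)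
    (O : F × F) (hO : eval (c + (s • y0 + (O.1 • y + O.2 • y2))) f ≠ 0) :
    {x : F × F | eval (c + (s • y0 + (x.1 • y + x.2 • y2))) f = 0}.ncard ≤ (q - K.ncard) * (Fintype.card F + 1) := by
  apply plane_count _ _ O hO
  intro w
  have e : ∀ t : F, c + (s • y0 + ((O + t • w).1 • y + (O + t • w).2 • y2))
     = (c + (s • y0 + (O.1 • y + O.2 • y2))) + t • (w.1 • y + w.2 • y2) := by
    intro t
    simp only [Prod.fst_add, Prod.snd_add, Prod.smul_fst, Prod.smul_snd, smul_eq_mul]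
    module
  simp_rw [e]
  have hm : w.1 • y + w.2 • y2 ∈ π := π.add_mem (π.smul_mem _ hy) (π.smul_mem _ hy2)
  apply linePoly_roots_le
  · rw [Polynomial.natDegree_le_iff_coeff_eq_zero]
    intro i hi
    apply coeff_vanish hcard hq hf π hπ hy0 hm ((fun a => a - s) '' K)
    · rintro _ ⟨s', hs', rfl⟩ t
      have := hK s' hs' (O.1 + t * w.1) (O.2 + t * w.2)
      convert this using 3
      simp only
      module
    · rw [Set.ncard_image_of_injective _ (sub_left_injective)]
      omega
  · intro h0
    have := eval_linePoly f (c + (s • y0 + (O.1 • y + O.2 • y2))) (w.1 • y + w.2 • y2) 0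
    rw [h0, zero_smul, add_zero] at this
    exact hO (by simpa using this.symm)

lemma coset_struct (hcard : Fintype.card F = q ^ 2) (hq : 3 ≤ q)
    {f : MvPolynomial (Fin 7) F} (hf : f.IsHomogeneous (q+1)) (π : Submodule F (Fin 7 → F)) (h3 : finrank F π = 3)
    (hπ : ∀ v ∈ π, eval v f = 0) {c : Fin 7 → F}
    (hN : {x : π | eval (c + (x : Fin 7 → F)) f = 0}.ncard = q^5) :
    ∃ y0 y y2 : Fin 7 → F, ∃ K : Set F, y0 ∈ π ∧ y ∈ π ∧ y2 ∈ π ∧ LinearIndependent F ![y, y2] ∧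
      (∀ x ∈ π, ∃ s a b : F, x = s • y0 + (a • y + b • y2)) ∧ K.ncard = q ∧
      ∀ s a b : F, eval (c + (s • y0 + (a • y + b • y2))) f = 0 ↔ s ∈ K := by
  classical
  have hline : ∀ x y : π, {t : F | eval (c + ((x + t • y : π) : Fin 7 → F)) f = 0}.ncard ≤ q ∨
      ∀ t : F, eval (c + ((x + t • y : π) : Fin 7 → F)) f = 0 := by
    intro x y
    have e : ∀ t : F, c + ((x + t • y : π) : Fin 7 → F) = (c + (x : Fin 7 → F)) + t • (y : Fin 7 → F) := by
      intro t; simp [add_assoc]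
    simp_rw [e]
    by_cases h0 : linePoly f (c + (x : Fin 7 → F)) y = 0
    · right; intro t; rw [← eval_linePoly, h0]; simp
    · left; exact linePoly_roots_le _ _ _ _ (linePoly_deg_q hf _ (hπ _ y.2)) h0
  obtain ⟨R, y, y2, hli, hfull⟩ := full_plane hcard hq h3 (fun x : π => eval (c + (x : Fin 7 → F)) f = 0) hline hN
  obtain ⟨y0, hy0⟩ : ∃ y0 : π, y0 ∉ Submodule.span F (Set.range ![y, y2]) := by
    by_contra hcon
    push Not at hcon
    have h1 : Submodule.span F (Set.range ![y, y2]) = ⊤ := by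
      rw [eq_top_iff]; exact fun x _ => hcon x
    have h2 := finrank_span_eq_card hli
    rw [h1, finrank_top, h3] at h2
    simp at h2
  have hli3 : LinearIndependent F ![y0, y, y2] := hli.finCons' _ _ (by
    intro a v hv hav
    by_contra ha
    apply hy0
    have : y0 = a⁻¹ • (-(v : π)) := by
      have h1 : a • y0 = - (v : π) := eq_neg_of_add_eq_zero_left hav
      calc y0 = a⁻¹ • (a • y0) := by rw [smul_smul, inv_mul_cancel₀ ha, one_smul]
        _ = _ := by rw [h1]
    rw [this]
    exact Submodule.smul_mem _ _ (Submodule.neg_mem _ hv))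
  let B := basisOfLinearIndependentOfCardEqFinrank hli3 (by simp [h3])
  let Φ : F × F × F → π := fun p => p.1 • y0 + (p.2.1 • y + p.2.2 • y2)
  have hΦ : Function.Bijective Φ := by
    rw [Fintype.bijective_iff_injective_and_card]
    constructor
    · rintro ⟨a, b, d⟩ ⟨a', b', d'⟩ h
      have h1 : (a - a') • y0 + ((b - b') • y + (d - d') • y2) = 0 := by
        have : a • y0 + (b • y + d • y2) = a' • y0 + (b' • y + d' • y2) := h
        rw [← sub_eq_zero] at this
        rw [← this]; module
      have h2 := Fintype.linearIndependent_iff.mp hli3 ![a-a', b-b', d-d'] (by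
        simpa [Fin.sum_univ_three, add_assoc] using h1)
      have e0 := h2 0
      have e1 := h2 1
      have e2 := h2 2
      simp [sub_eq_zero] at e0 e1 e2
      simp [e0, e1, e2]
    · rw [← Nat.card_eq_fintype_card, ← Nat.card_eq_fintype_card, Module.natCard_eq_pow_finrank (K := F) (V := π), h3]
      simp only [Nat.card_prod]; ring
  have hΦe : ∀ p, ((Φ p : π) : Fin 7 → F) = p.1 • (y0 : Fin 7 → F) + (p.2.1 • (y : Fin 7 → F) + p.2.2 • (y2 : Fin 7 → F)) := by
    intro p; simp [Φ]
  let n : F → ℕ := fun s => {x : F × F | eval (c + (s • (y0 : Fin 7 → F) + (x.1 • (y : Fin 7 → F) + x.2 • (y2 : Fin 7 → F)))) f = 0}.ncard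
  have hsum : ∑ s, n s = q^5 := by
    rw [← hN]
    have : {x : π | eval (c + (x : Fin 7 → F)) f = 0}.ncard
       = {p : F × F × F | eval (c + (p.1 • (y0 : Fin 7 → F) + (p.2.1 • (y : Fin 7 → F) + p.2.2 • (y2 : Fin 7 → F)))) f = 0}.ncard := by
      have h1 : {x : π | eval (c + (x : Fin 7 → F)) f = 0} = Φ '' {p : F × F × F | eval (c + (p.1 • (y0 : Fin 7 → F) + (p.2.1 • (y : Fin 7 → F) + p.2.2 • (y2 : Fin 7 → F)))) f = 0} := by
        ext x
        obtain ⟨p, rfl⟩ := hΦ.2 x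
        rw [hΦ.1.mem_set_image]
        simp only [Set.mem_ofPred_eq, hΦe]
      rw [h1, Set.ncard_image_of_injective _ hΦ.1]
    rw [this]
    simp only [n]
    simp_rw [ncard_setOf', Finset.card_filter]
    rw [Fintype.sum_prod_type]
  let K : Set F := {s | ∀ a b : F, eval (c + (s • (y0 : Fin 7 → F) + (a • (y : Fin 7 → F) + b • (y2 : Fin 7 → F)))) f = 0}
  have hK1 : 1 ≤ K.ncard := by
    rw [Nat.one_le_iff_ne_zero, Ne, Set.ncard_eq_zero (Set.toFinite _), ← Ne, ← Set.nonempty_iff_ne_empty]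
    obtain ⟨⟨s, a0, b0⟩, hp⟩ := hΦ.2 R
    refine ⟨s, fun a b => ?_⟩
    have := hfull (a - a0) (b - b0)
    have hR : (R : Fin 7 → F) = s • (y0 : Fin 7 → F) + (a0 • (y : Fin 7 → F) + b0 • (y2 : Fin 7 → F)) := by
      rw [← hp, hΦe]
    convert this using 3
    simp only [Submodule.coe_add, Submodule.coe_smul, hR]
    module
  have hnK : ∀ s ∈ K, n s = q^4 := by
    intro s hs
    have : {x : F × F | eval (c + (s • (y0 : Fin 7 → F) + (x.1 • (y : Fin 7 → F) + x.2 • (y2 : Fin 7 → F)))) f = 0} = Set.univ := by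
      ext x; simp only [Set.mem_ofPred_eq, Set.mem_univ, iff_true]; exact hs x.1 x.2
    simp only [n]
    rw [this, Set.ncard_univ, Nat.card_prod, Nat.card_eq_fintype_card, hcard]; ring
  have hsplit : K.ncard * q^4 + ∑ s ∈ Finset.univ.filter (fun s => s ∉ K), n s = q^5 := by
    rw [← hsum, ← Finset.sum_filter_add_sum_filter_not Finset.univ (fun s => s ∈ K)]
    congr 1
    rw [Finset.sum_congr rfl (fun s hs => hnK s (by simpa using hs)), Finset.sum_const, ← ncard_setOf', smul_eq_mul]; rfl
  have hKq : K.ncard ≤ q := by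
    have : K.ncard * q^4 ≤ q * q^4 := by
      calc _ ≤ q^5 := by omega
        _ = _ := by ring
    exact Nat.le_of_mul_le_mul_right this (by positivity)
  have hKeq : K.ncard = q := by
    by_contra hne
    have hlt : K.ncard < q := lt_of_le_of_ne hKq hne
    have hub : ∑ s ∈ Finset.univ.filter (fun s => s ∉ K), n s ≤ (q^2 - K.ncard) * ((q - K.ncard) * (q^2+1)) := by
      have h1 := Finset.sum_le_card_nsmul (Finset.univ.filter (fun s => s ∉ K)) n ((q - K.ncard) * (q^2+1)) (by
        intro s hs
        have hs' : s ∉ K := by simpa using hs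
        have : ∃ a b : F, eval (c + (s • (y0 : Fin 7 → F) + (a • (y : Fin 7 → F) + b • (y2 : Fin 7 → F)))) f ≠ 0 := by
          by_contra hcon; push Not at hcon; exact hs' hcon
        obtain ⟨a, b, hab⟩ := this
        have h2 := coset_nonfull hcard hq hf π hπ y0.2 y.2 y2.2 K hKq (fun s hs => hs) s (a, b) hab
        rw [hcard] at h2
        exact h2)
      have h2 : (Finset.univ.filter (fun s => s ∉ K)).card = q^2 - K.ncard := by
        rw [← ncard_setOf']
        have : {x | x ∉ K} = Kᶜ := rfl
        rw [this, Set.ncard_compl, Nat.card_eq_fintype_card, hcard]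
      rwa [h2, smul_eq_mul] at h1
    have hb := hsplit.symm.le.trans (Nat.add_le_add_left hub _)
    obtain ⟨d, hd⟩ := Nat.exists_eq_add_of_lt hlt
    have hle : K.ncard ≤ q^2 := by nlinarith
    set k := K.ncard
    have hqk : q - k = d + 1 := by omega
    rw [hqk] at hb
    zify [hle] at hb
    have hd' : (q:ℤ) = k + d + 1 := by exact_mod_cast hd
    have h1 : ((d:ℤ)+1) * q^4 ≤ (d+1) * (((q:ℤ)^2 - k) * (q^2+1)) := by
      have e : (q:ℤ)^5 = k * q^4 + (d+1) * q^4 := by rw [pow_succ (q:ℤ) 4]; nth_rewrite 2 [hd']; ring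
      linarith
    have h2 := le_of_mul_le_mul_left h1 (by positivity)
    have hk1 : (1:ℤ) ≤ k := by exact_mod_cast hK1
    nlinarith [sq_nonneg (q:ℤ)]
  refine ⟨y0, y, y2, K, y0.2, y.2, y2.2, ?_, ?_, hKeq, ?_⟩
  · have := hli.map' π.subtype (Submodule.ker_subtype π)
    have e : (π.subtype ∘ ![y, y2]) = ![(y : Fin 7 → F), (y2 : Fin 7 → F)] := by
      ext i; fin_cases i <;> rfl
    rw [e] at this
    exact this
  · intro x hx
    obtain ⟨p, hp⟩ := hΦ.2 ⟨x, hx⟩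
    refine ⟨p.1, p.2.1, p.2.2, ?_⟩
    rw [← hΦe, hp]
  · intro s a b
    constructor
    · intro h
      by_contra hs
      have hz : ∑ s ∈ Finset.univ.filter (fun s => s ∉ K), n s = 0 := by
        rw [hKeq] at hsplit
        have : q * q^4 = q^5 := by ring
        omega
      rw [Finset.sum_eq_zero_iff] at hz
      have h2 := hz s (by simpa using hs)
      simp only [n] at h2
      rw [Set.ncard_eq_zero (Set.toFinite _)] at h2
      have : (a, b) ∈ (∅ : Set (F × F)) := by rw [← h2]; exact h
      exact this
    · intro h; exact h a b

lemma Mc_exists (hcard : Fintype.card F = q ^ 2) (hq : 3 ≤ q)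
    {f : MvPolynomial (Fin 7) F} (hf : f.IsHomogeneous (q+1)) (π : Submodule F (Fin 7 → F)) (h3 : finrank F π = 3)
    (hπ : ∀ v ∈ π, eval v f = 0) {c : Fin 7 → F}
    (hN : {x : π | eval (c + (x : Fin 7 → F)) f = 0}.ncard = q^5) :
    ∃ M : Submodule F (Fin 7 → F), M ≤ π ∧ finrank F M = 2 ∧ (∀ y ∈ π, (phiL hf y c = 0 ↔ y ∈ M)) ∧
      (∀ m ∈ M, (eval c f = 0 ↔ eval (c + m) f = 0)) ∧
      (∀ y ∈ π, y ∉ M → {t : F | eval (c + t • y) f = 0}.ncard = q) := by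
  classical
  obtain ⟨y0, y, y2, K, hy0, hy, hy2, hli, hcoord, hKq, hZ⟩ := coset_struct hcard hq hf π h3 hπ hN
  have hlin : ∀ w ∈ π, w ∉ Submodule.span F (Set.range ![y, y2]) → {t : F | eval (c + t • w) f = 0}.ncard = q := by
    intro w hw hwM
    obtain ⟨s, a, b, rfl⟩ := hcoord w hw
    have hs : s ≠ 0 := by
      rintro rfl
      apply hwM
      rw [zero_smul, zero_add]
      exact Submodule.add_mem _ (Submodule.smul_mem _ _ (Submodule.subset_span ⟨0, rfl⟩)) (Submodule.smul_mem _ _ (Submodule.subset_span ⟨1, rfl⟩))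
    have : {t : F | eval (c + t • (s • y0 + (a • y + b • y2))) f = 0} = (fun k => k * s⁻¹) '' K := by
      ext t
      have e : t • (s • y0 + (a • y + b • y2)) = (t * s) • y0 + ((t*a) • y + (t*b) • y2) := by module
      rw [Set.mem_ofPred_eq, e, hZ]
      constructor
      · intro h; exact ⟨_, h, by field_simp⟩
      · rintro ⟨k, hk, rfl⟩
        simpa [hs] using hk
    rw [this, Set.ncard_image_of_injective _ (mul_left_injective₀ (inv_ne_zero hs)), hKq]
  have hMπ : Submodule.span F (Set.range ![y, y2]) ≤ π := by
    rw [Submodule.span_le]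
    rintro _ ⟨i, rfl⟩
    fin_cases i
    · exact hy
    · exact hy2
  have hMm : ∀ m ∈ Submodule.span F (Set.range ![y, y2]), ∃ a b : F, m = a • y + b • y2 := by
    intro m hm
    have : Set.range ![y, y2] = {y, y2} := by simp [Set.pair_comm]
    rw [this, Submodule.mem_span_pair] at hm
    obtain ⟨a, b, h⟩ := hm
    exact ⟨a, b, h.symm⟩
  refine ⟨Submodule.span F (Set.range ![y, y2]), hMπ, ?_, ?_, ?_, hlin⟩
  · rw [finrank_span_eq_card hli]; simp
  · intro w hw
    constructor
    · intro h
      by_contra hwM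
      have h1 := hlin w hw hwM
      by_cases h0 : linePoly f c w = 0
      · have : {t : F | eval (c + t • w) f = 0} = Set.univ := by
          ext t
          simp only [Set.mem_ofPred_eq, Set.mem_univ, iff_true]
          rw [← eval_linePoly, h0]; simp
        rw [this, Set.ncard_univ, Nat.card_eq_fintype_card, hcard] at h1
        nlinarith
      · have h2 := linePoly_roots_le f c w (q-1) (natDegree_le_of_coeff _ _ (by
          rw [Nat.sub_add_cancel (by omega)]; exact linePoly_deg_q hf _ (hπ w hw)) (by
          rw [Nat.sub_add_cancel (by omega)]; exact h)) h0
        omega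
    · intro hwM
      obtain ⟨a, b, rfl⟩ := hMm w hwM
      have hne : K.Nonempty := by
        rw [Set.nonempty_iff_ne_empty]
        rintro rfl
        simp at hKq; omega
      obtain ⟨s, hs⟩ := hne
      have h1 : linePoly f (c + s • y0) (a • y + b • y2) = 0 := by
        apply linePoly_eq_zero
        · have := linePoly_natDegree_le hf (c + s • y0) (a • y + b • y2)
          rw [hcard]; nlinarith
        · intro t
          have := (hZ s (t*a) (t*b)).mpr hs
          convert this using 3
          module
      have h2 := (phiL hf (a • y + b • y2)).map_add c (s • y0)
      rw [phiL_pi hcard hq hf π hπ (π.smul_mem _ hy0) hw, phiL_apply, h1] at h2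
      simpa using h2.symm
  · intro m hm
    obtain ⟨a, b, rfl⟩ := hMm m hm
    have h1 := hZ 0 0 0
    have h2 := hZ 0 a b
    simp only [zero_smul, zero_add, add_zero] at h1 h2
    rw [h1, h2]
end step5

section step6
variable {F : Type*} [Field F] [Fintype F] {q : ℕ}

lemma ker_contains (φ : (Fin 7 → F) → (Fin 7 → F) →ₗ[F] F)
    (Sg : Submodule F (Fin 7 → F)) (hS4 : finrank F Sg = 4)
    (π : Submodule F (Fin 7 → F)) (h3 : finrank F π = 3)
    (hM : ∀ c ∉ Sg, ∃ M : Submodule F (Fin 7 → F), M ≤ π ∧ finrank F M = 2 ∧ (∀ y ∈ π, (φ y c = 0 ↔ y ∈ M))) :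
    ∀ x ∈ π, x ≠ 0 → Sg ≤ LinearMap.ker (φ x) ∧ finrank F (LinearMap.ker (φ x)) = 6 := by
  classical
  set Q := Fintype.card F with hQ
  have hQ1 : 1 < Q := Fintype.one_lt_card
  have hker : ∀ x, 6 ≤ finrank F (LinearMap.ker (φ x)) := by
    intro x
    have h1 := LinearMap.finrank_range_add_finrank_ker (φ x)
    have h2 : finrank F (LinearMap.range (φ x)) ≤ 1 := by
      have := Submodule.finrank_le (LinearMap.range (φ x))
      simpa using this
    simp only [finrank_fintype_fun_eq_card, Fintype.card_fin] at h1
    omega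
  have hcnt : ∀ x, {c | c ∉ Sg ∧ φ x c = 0}.ncard + Q ^ finrank F ↥(LinearMap.ker (φ x) ⊓ Sg) = Q ^ finrank F (LinearMap.ker (φ x)) := by
    intro x
    rw [← ncard_submodule, ← ncard_submodule]
    rw [← Set.ncard_sdiff_add_ncard_of_subset (s := ((LinearMap.ker (φ x) ⊓ Sg : Submodule F (Fin 7 → F)) : Set (Fin 7 → F))) (t := (LinearMap.ker (φ x) : Set (Fin 7 → F))) (fun v hv => hv.1) (Set.toFinite _)]
    congr 2
    ext v
    simp only [Set.mem_ofPred_eq, Set.mem_sdiff, SetLike.mem_coe, Submodule.mem_inf, LinearMap.mem_ker]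
    tauto
  have hcap : ∀ x, finrank F ↥(LinearMap.ker (φ x) ⊓ Sg) ≤ 4 := by
    intro x
    rw [← hS4]
    exact Submodule.finrank_mono inf_le_right
  have hge : ∀ x, Q^6 - Q^4 ≤ {c | c ∉ Sg ∧ φ x c = 0}.ncard := by
    intro x
    have h1 := hcnt x
    have h2 : Q^6 ≤ Q ^ finrank F (LinearMap.ker (φ x)) := Nat.pow_le_pow_right (by omega) (hker x)
    have h3 : Q ^ finrank F ↥(LinearMap.ker (φ x) ⊓ Sg) ≤ Q^4 := Nat.pow_le_pow_right (by omega) (hcap x)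
    omega
  have hrow : ∀ c ∉ Sg, {y : π | y ≠ 0 ∧ φ y c = 0}.ncard = Q^2 - 1 := by
    intro c hc
    obtain ⟨M, hMπ, hM2, hMy⟩ := hM c hc
    have h1 : {y : π | y ≠ 0 ∧ φ y c = 0}.ncard = ((M : Set (Fin 7 → F)) \ {0}).ncard := by
      rw [← Set.ncard_image_of_injective _ (Subtype.val_injective : Function.Injective (Subtype.val : π → (Fin 7 → F)))]
      congr 1
      ext v
      simp only [Set.mem_image, Set.mem_ofPred_eq, Set.mem_sdiff, SetLike.mem_coe, Set.mem_singleton_iff]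
      constructor
      · rintro ⟨y, ⟨hy, hy2⟩, rfl⟩
        exact ⟨(hMy y y.2).mp hy2, by simpa using hy⟩
      · rintro ⟨a, b⟩
        exact ⟨⟨v, hMπ a⟩, ⟨by simpa using b, (hMy v (hMπ a)).mpr a⟩, rfl⟩
    rw [h1, Set.ncard_sdiff_singleton_of_mem (by simp), ncard_submodule, hM2]
  have hdouble : ∑ y ∈ Finset.univ.filter (fun y : π => y ≠ 0), {c | c ∉ Sg ∧ φ y c = 0}.ncard
      = ∑ c ∈ Finset.univ.filter (fun c => c ∉ Sg), {y : π | y ≠ 0 ∧ φ y c = 0}.ncard := by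
    simp_rw [ncard_setOf', ← Finset.filter_filter, Finset.card_filter _ (Finset.filter _ _)]
    rw [Finset.sum_comm]
  have hr : ∑ c ∈ Finset.univ.filter (fun c => c ∉ Sg), {y : π | y ≠ 0 ∧ φ y c = 0}.ncard = (Q^7 - Q^4) * (Q^2-1) := by
    rw [Finset.sum_congr rfl (fun c hc => hrow c (by simpa using hc)), Finset.sum_const, smul_eq_mul]
    congr 1
    rw [← ncard_setOf']
    have : {x | x ∉ Sg} = (Sg : Set (Fin 7 → F))ᶜ := rfl
    rw [this, Set.ncard_compl, ncard_submodule, hS4, Nat.card_eq_fintype_card, Fintype.card_fun, Fintype.card_fin]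
  have hl : ∑ y ∈ Finset.univ.filter (fun y : π => y ≠ 0), (Q^6 - Q^4) = (Q^3-1) * (Q^6-Q^4) := by
    rw [Finset.sum_const, smul_eq_mul]
    congr 1
    rw [← ncard_setOf']
    have : {x : π | x ≠ 0} = {0}ᶜ := rfl
    rw [this, Set.ncard_compl, Set.ncard_singleton, Module.natCard_eq_pow_finrank (K := F) (V := π), h3, Nat.card_eq_fintype_card]
  have heq : ∑ y ∈ Finset.univ.filter (fun y : π => y ≠ 0), (Q^6 - Q^4) = ∑ y ∈ Finset.univ.filter (fun y : π => y ≠ 0), {c | c ∉ Sg ∧ φ y c = 0}.ncard := by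
    rw [hdouble, hr, hl]
    have e1 : Q^4 ≤ Q^6 := Nat.pow_le_pow_right (by omega) (by omega)
    have e2 : Q^4 ≤ Q^7 := Nat.pow_le_pow_right (by omega) (by omega)
    have e3 : 1 ≤ Q^3 := Nat.one_le_pow _ _ (by omega)
    have e4 : 1 ≤ Q^2 := Nat.one_le_pow _ _ (by omega)
    zify [e1, e2, e3, e4]; ring
  rw [Finset.sum_eq_sum_iff_of_le (fun (y : π) _ => hge (y : Fin 7 → F))] at heq
  intro x hx hx0
  have h := heq ⟨x, hx⟩ (by simpa using hx0)
  simp only at h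
  have h1 := hcnt x
  have e1 : Q^4 ≤ Q^6 := Nat.pow_le_pow_right (by omega) (by omega)
  have h5 : Q^6 + Q ^ finrank F ↥(LinearMap.ker (φ x) ⊓ Sg) = Q ^ finrank F (LinearMap.ker (φ x)) + Q^4 := by omega
  have e3 : Q ^ finrank F ↥(LinearMap.ker (φ x) ⊓ Sg) ≤ Q^4 := Nat.pow_le_pow_right (by omega) (hcap x)
  have e2 : Q^6 ≤ Q ^ finrank F (LinearMap.ker (φ x)) := Nat.pow_le_pow_right (by omega) (hker x)
  have h6 : Q ^ finrank F (LinearMap.ker (φ x)) = Q^6 := by omega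
  have h7 : Q ^ finrank F ↥(LinearMap.ker (φ x) ⊓ Sg) = Q^4 := by omega
  refine ⟨?_, Nat.pow_right_injective hQ1 h6⟩
  have h8 := Nat.pow_right_injective hQ1 h7
  have := Submodule.eq_of_le_of_finrank_eq (inf_le_right : LinearMap.ker (φ x) ⊓ Sg ≤ Sg) (by rw [h8, hS4])
  rw [← this]; exact inf_le_left
end step6

section quad
variable {F E : Type*} [Field F] [Fintype F] [AddCommGroup E] [Module F E] [Fintype E]

lemma card_annih [Fintype (Dual F E)] (P : Submodule F E) (h3 : finrank F E = 3) :
    ((P.dualAnnihilator : Submodule F (Dual F E)) : Set (Dual F E)).ncard = Fintype.card F ^ (3 - finrank F P) := by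
  have : FiniteDimensional F E := FiniteDimensional.of_finrank_pos (by omega)
  rw [ncard_submodule]
  congr 1
  have := Subspace.finrank_add_finrank_dualAnnihilator_eq P
  omega

lemma quad {q : ℕ} (hcard : Fintype.card F = q ^ 2) (hq : 3 ≤ q) (h3 : finrank F E = 3)
    (A : Set E) (h0 : (0 : E) ∈ A) (hsm : ∀ v ∈ A, ∀ c : F, c • v ∈ A)
    (hA : A.ncard + q^3 = q^2 + q^5)
    (hL : ∀ L : Submodule F E, finrank F L = 2 → q^2 ≤ {v | v ∈ A ∧ v ∈ L}.ncard ∧ {v | v ∈ A ∧ v ∈ L}.ncard + q ≤ q^3 + q^2)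
    (L : Submodule F E) (hL2 : finrank F L = 2) :
    {v | v ∈ A ∧ v ∈ L}.ncard = q^2 ∨ {v | v ∈ A ∧ v ∈ L}.ncard + q = q^3 + q^2 := by
  classical
  have : FiniteDimensional F E := FiniteDimensional.of_finrank_pos (by omega)
  have : Finite (Dual F E) := DFunLike.finite _
  have : Fintype (Dual F E) := Fintype.ofFinite _
  set Q : ℤ := (q:ℤ)^2 with hQ
  let Af := Finset.univ.filter (· ∈ A)
  have hAf : (Af.card : ℤ) = q^2 + q^5 - q^3 := by
    have : Af.card = A.ncard := by rw [← ncard_setOf']; rfl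
    rw [this]; zify at hA; linarith
  let zz : Dual F E → ℤ := fun l => ∑ v ∈ Af, if l v = 0 then 1 else 0
  have hzz : ∀ l, zz l = ({v | v ∈ A ∧ v ∈ LinearMap.ker l}.ncard : ℤ) := by
    intro l
    simp only [zz]
    rw [ncard_setOf', ← Finset.filter_filter, Finset.card_filter]
    push_cast
    rfl
  -- number of functionals killing a pair
  have hc : ∀ v w : E, (∑ l : Dual F E, (if l v = 0 then (1:ℤ) else 0) * (if l w = 0 then 1 else 0))
      = Q ^ (3 - finrank F (Submodule.span F {v, w})) := by
    intro v w
    have h1 := card_annih (Submodule.span F {v, w}) h3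
    have h2 : ((Submodule.span F {v, w}).dualAnnihilator : Set (Dual F E)) = {l | l v = 0 ∧ l w = 0} := by
      ext l
      simp only [SetLike.mem_coe, Submodule.mem_dualAnnihilator, Set.mem_ofPred_eq]
      constructor
      · intro h
        exact ⟨h v (Submodule.subset_span (by simp)), h w (Submodule.subset_span (by simp))⟩
      · rintro ⟨ha, hb⟩ x hx
        obtain ⟨a, b, rfl⟩ := Submodule.mem_span_pair.mp hx
        simp [ha, hb]
    rw [h2, ncard_setOf', Finset.card_filter, hcard] at h1
    have h4 : ((∑ i : Dual F E, if i v = 0 ∧ i w = 0 then 1 else 0 : ℕ) : ℤ) = ((q^2)^(3 - finrank F (Submodule.span F {v, w})) : ℕ) := by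
      rw [h1]
    push_cast at h4
    rw [hQ, ← h4]
    apply Finset.sum_congr rfl
    intro l _
    by_cases ha : l v = 0 <;> by_cases hb : l w = 0 <;> simp [ha, hb]
  have hc1 : ∀ v : E, (∑ l : Dual F E, (if l v = 0 then (1:ℤ) else 0)) = if v = 0 then Q^3 else Q^2 := by
    intro v
    have := hc v v
    have e : ∀ l : Dual F E, (if l v = 0 then (1:ℤ) else 0) * (if l v = 0 then 1 else 0) = if l v = 0 then (1:ℤ) else 0 := by
      intro l; split_ifs <;> simp
    simp_rw [e] at this
    rw [this, Set.pair_eq_singleton]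
    by_cases hv : v = 0
    · rw [if_pos hv, hv, Submodule.span_zero_singleton, finrank_bot]
    · rw [finrank_span_singleton hv]; simp [hv]
  have hrow : ∀ g : E → ℤ, (∀ a b : ℤ, (∀ v, g v = if v = 0 then a else b) → ∑ v ∈ Af, g v = a + (Af.card - 1) * b) := by
    intro g a b hg
    simp_rw [hg]
    have h0A : (0:E) ∈ Af := by simpa [Af] using h0
    rw [← Finset.add_sum_erase _ _ h0A, Finset.sum_congr rfl (g := fun _ => b) (fun v hv => by
      rw [if_neg (Finset.ne_of_mem_erase hv)]), Finset.sum_const, Finset.card_erase_of_mem h0A, if_pos rfl,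
      nsmul_eq_mul, Nat.cast_sub (Finset.card_pos.mpr ⟨_, h0A⟩)]
    simp
  have hm1 : ∑ l, zz l = Q^3 + (Af.card - 1) * Q^2 := by
    simp only [zz]
    rw [Finset.sum_comm]
    exact hrow _ _ _ hc1
  have hm2 : ∑ l, zz l ^ 2 = (Q^3 + (Af.card - 1) * Q^2) + (Af.card - 1) * (Q^3 + (Af.card - Q) * Q) := by
    have : ∀ l, zz l ^ 2 = ∑ v ∈ Af, ∑ w ∈ Af, (if l v = 0 then (1:ℤ) else 0) * (if l w = 0 then 1 else 0) := by
      intro l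
      rw [sq, Finset.sum_mul_sum]
    simp_rw [this]
    rw [Finset.sum_comm]
    have h0A : (0:E) ∈ Af := by simpa [Af] using h0
    have hv : ∀ v ∈ Af, (∑ l : Dual F E, ∑ w ∈ Af, (if l v = 0 then (1:ℤ) else 0) * (if l w = 0 then 1 else 0))
       = if v = 0 then (Q^3 + (Af.card - 1) * Q^2) else (Q^3 + (Af.card - Q) * Q) := by
      intro v hvA
      rw [Finset.sum_comm]
      by_cases hv0 : v = 0
      · rw [if_pos hv0]
        apply hrow
        intro w
        rw [← hc1 w]
        apply Finset.sum_congr rfl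
        intro l _
        simp [hv0]
      · rw [if_neg hv0]
        simp_rw [hc]
        have hw : ∀ w, Q ^ (3 - finrank F (Submodule.span F {v, w})) = if w ∈ Submodule.span F {v} then Q^2 else Q := by
          intro w
          by_cases hw : w ∈ Submodule.span F {v}
          · rw [if_pos hw]
            have : Submodule.span F {v, w} = Submodule.span F {v} := by
              rw [Set.pair_comm]; exact Submodule.span_insert_eq_span hw
            rw [this, finrank_span_singleton hv0]
          · rw [if_neg hw]
            have : LinearIndependent F ![v, w] := by
              rw [LinearIndependent.pair_iff' hv0]
              intro a ha
              exact hw (Submodule.mem_span_singleton.mpr ⟨a, ha⟩)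
            have h2 := finrank_span_eq_card this
            have h4 : Set.range ![v, w] = {v, w} := by simp [Set.pair_comm]
            rw [h4] at h2
            rw [h2]; simp
        simp_rw [hw]
        rw [Finset.sum_ite, Finset.sum_const, Finset.sum_const]
        have e1 : (Af.filter (· ∈ Submodule.span F {v})).card = q^2 := by
          have : Af.filter (· ∈ Submodule.span F {v}) = Finset.univ.filter (· ∈ Submodule.span F {v}) := by
            ext w
            simp only [Af, Finset.mem_filter, Finset.mem_univ, true_and, and_iff_right_iff_imp]
            intro hw
            obtain ⟨a, rfl⟩ := Submodule.mem_span_singleton.mp hw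
            exact hsm v (by simpa [Af] using hvA) a
          rw [this, ← ncard_setOf']
          have h5 := ncard_submodule (F := F) (Submodule.span F {v})
          rw [finrank_span_singleton hv0, hcard, pow_one] at h5
          exact h5
        have e2 : ((Af.filter (· ∉ Submodule.span F {v})).card : ℤ) = Af.card - Q := by
          have := Finset.card_filter_add_card_filter_not (s := Af) (· ∈ Submodule.span F {v})
          rw [e1] at this
          zify at this
          rw [hQ]; linarith
        rw [nsmul_eq_mul, nsmul_eq_mul, e1, e2]
        push_cast
        rw [hQ]; ring
    rw [Finset.sum_congr rfl hv]
    exact hrow _ _ _ (fun v => rfl)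
  have hcD : (Fintype.card (Dual F E) : ℤ) = Q^3 := by
    have h1 : Fintype.card (Dual F E) = (q^2)^3 := by
      rw [← Nat.card_eq_fintype_card, Module.natCard_eq_pow_finrank (K := F), Subspace.dual_finrank_eq, h3, Nat.card_eq_fintype_card, hcard]
    rw [h1]; push_cast; rfl
  set T : ℤ := q^3 + q^2 - q with hT
  have htot : ∑ l, (zz l - Q) * (T - zz l) = (zz 0 - Q) * (T - zz 0) := by
    have e : ∀ l, (zz l - Q) * (T - zz l) = (Q + T) * zz l - zz l ^ 2 - Q * T := by intro l; ring
    simp_rw [e]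
    rw [Finset.sum_sub_distrib, Finset.sum_sub_distrib, ← Finset.mul_sum, hm1, hm2, Finset.sum_const, Finset.card_univ, nsmul_eq_mul, hcD]
    have hz0 : zz 0 = Af.card := by simp [zz]
    rw [hz0, hAf, hT, hQ]
    ring
  have hrest : ∑ l ∈ Finset.univ.erase (0 : Dual F E), (zz l - Q) * (T - zz l) = 0 := by
    rw [← Finset.add_sum_erase _ _ (Finset.mem_univ (0 : Dual F E))] at htot
    linarith
  have hk2 : ∀ l : Dual F E, l ≠ 0 → finrank F (LinearMap.ker l) = 2 := by
    intro l hl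
    have := Module.Dual.finrank_ker_add_one_of_ne_zero hl
    omega
  rw [Finset.sum_eq_zero_iff_of_nonneg] at hrest
  · obtain ⟨l, hl, hle⟩ := Submodule.exists_le_ker_of_lt_top L (by
      rw [lt_top_iff_ne_top]; rintro rfl; rw [finrank_top] at hL2; omega)
    have heq := Submodule.eq_of_le_of_finrank_eq hle (by rw [hL2, hk2 l hl])
    have h1 := hrest l (by simpa using hl)
    rw [hzz, ← heq, mul_eq_zero] at h1
    rcases h1 with h1 | h1
    · left; zify; rw [hQ] at h1; linarith
    · right; zify; rw [hT] at h1; linarith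
  · intro l hl
    have := hL _ (hk2 l (by simpa using hl))
    rw [hzz]
    zify at this
    apply mul_nonneg
    · rw [hQ]; linarith [this.1]
    · rw [hT]; linarith [this.2]
end quad

section step7
variable {F : Type*} [Field F] [Fintype F] {q : ℕ}

/-- number of zeros of `f` in a subspace -/
noncomputable def zc (f : MvPolynomial (Fin 7) F) (X : Submodule F (Fin 7 → F)) : ℕ :=
  {v | v ∈ X ∧ eval v f = 0}.ncard

lemma zc_split (f : MvPolynomial (Fin 7) F) (X Y : Submodule F (Fin 7 → F)) :
    zc f X = {v | v ∈ (X : Set (Fin 7 → F)) \ Y ∧ eval v f = 0}.ncard + zc f (X ⊓ Y) := by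
  classical
  unfold zc
  rw [← Set.ncard_sdiff_add_ncard_of_subset (s := {v | v ∈ X ⊓ Y ∧ eval v f = 0}) (t := {v | v ∈ X ∧ eval v f = 0})
    (fun v hv => ⟨hv.1.1, hv.2⟩) (Set.toFinite _)]
  congr 2
  ext v
  simp only [Set.mem_ofPred_eq, Set.mem_sdiff, SetLike.mem_coe, Submodule.mem_inf]
  tauto

lemma card_diff (X Y : Submodule F (Fin 7 → F)) :
    ((X : Set (Fin 7 → F)) \ Y).ncard + Fintype.card F ^ finrank F ↥(X ⊓ Y) = Fintype.card F ^ finrank F X := by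
  classical
  rw [← ncard_submodule, ← ncard_submodule]
  rw [← Set.ncard_sdiff_add_ncard_of_subset (s := ((X ⊓ Y : Submodule F (Fin 7 → F)) : Set (Fin 7 → F))) (t := (X : Set (Fin 7 → F)))
    (fun v hv => hv.1) (Set.toFinite _)]
  congr 2
  ext v
  simp only [Set.mem_sdiff, SetLike.mem_coe, Submodule.mem_inf]
  tauto

lemma fibX {E : Type*} [Fintype E] (f : MvPolynomial (Fin 7) F) (X Y : Submodule F (Fin 7 → F)) (φ : E → Fin 7 → F)
    (hφ : ∀ e, φ e ∈ X ∧ φ e ∈ Y) (k : ℕ)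
    (h : ∀ v ∈ X, v ∉ Y → {e | eval (v + φ e) f = 0}.ncard = k) :
    Fintype.card E * zc f X + k * Fintype.card F ^ finrank F ↥(X ⊓ Y)
      = Fintype.card E * zc f (X ⊓ Y) + k * Fintype.card F ^ finrank F X := by
  have h1 := fib_eq φ ((X : Set (Fin 7 → F)) \ Y) (by
    intro e v
    simp only [Set.mem_sdiff, SetLike.mem_coe]
    rw [Submodule.add_mem_iff_left _ (hφ e).1, Submodule.add_mem_iff_left _ (hφ e).2]) (fun v => eval v f = 0) k (by
    intro v hv; exact h v hv.1 hv.2)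
  rw [zc_split f X Y, mul_add, h1, ← card_diff X Y]
  ring

lemma inter_dim {H π W : Submodule F (Fin 7 → F)} (hH : finrank F H = 6) (hπH : ¬ π ≤ H) (hπW : π ≤ W) :
    finrank F ↥(H ⊓ W) + 1 = finrank F W := by
  have h1 := Submodule.finrank_sup_add_finrank_inf_eq H W
  have h2 : finrank F H < finrank F ↥(H ⊔ W) := by
    apply Submodule.finrank_lt_finrank_of_lt
    rw [left_lt_sup]
    exact fun h => hπH (hπW.trans h)
  have h3 := Submodule.finrank_le (H ⊔ W)
  simp only [finrank_fintype_fun_eq_card, Fintype.card_fin] at h3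
  omega

lemma prod_dim {l C X : Submodule F (Fin 7 → F)} (hC : IsCompl l C) (hlX : l ≤ X) :
    finrank F ↥(X ⊓ C) + finrank F l = finrank F X := by
  have h1 := Submodule.finrank_sup_add_finrank_inf_eq l (C ⊓ X)
  rw [← sup_inf_assoc_of_le C hlX, hC.sup_eq_top, top_inf_eq, ← inf_assoc, hC.inf_eq_bot, bot_inf_eq, finrank_bot,
    inf_comm C X] at h1
  omega

lemma prod_count (f : MvPolynomial (Fin 7) F) {l C X : Submodule F (Fin 7 → F)} (hC : IsCompl l C) (hlX : l ≤ X)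
    (hinv : ∀ v ∈ X, ∀ m ∈ l, (eval v f = 0 ↔ eval (v + m) f = 0)) :
    zc f X = Fintype.card F ^ finrank F l * zc f (X ⊓ C) := by
  classical
  unfold zc
  rw [← ncard_submodule, ← Set.ncard_prod]
  rw [← Set.ncard_image_of_injOn (s := (l : Set (Fin 7 → F)) ×ˢ {v | v ∈ X ⊓ C ∧ eval v f = 0}) (f := fun p => p.2 + p.1)]
  · congr 1
    ext v
    simp only [Set.mem_image, Set.mem_prod, Set.mem_ofPred_eq, SetLike.mem_coe, Prod.exists, Submodule.mem_inf]
    constructor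
    · rintro ⟨hv, hvf⟩
      have : v ∈ l ⊔ C := by rw [hC.sup_eq_top]; trivial
      obtain ⟨a, ha, b, hb, rfl⟩ := Submodule.mem_sup.mp this
      have hbX : b ∈ X := (Submodule.add_mem_iff_right _ (hlX ha)).mp hv
      refine ⟨a, b, ⟨ha, ⟨hbX, hb⟩, ?_⟩, add_comm _ _⟩
      rw [hinv b hbX a ha, add_comm]; exact hvf
    · rintro ⟨a, b, ⟨ha, ⟨hbX, hb⟩, hbf⟩, rfl⟩
      exact ⟨X.add_mem hbX (hlX ha), (hinv b hbX a ha).mp hbf⟩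
  · rintro ⟨a, b⟩ ⟨ha, ⟨_, hb⟩, _⟩ ⟨a', b'⟩ ⟨ha', ⟨_, hb'⟩, _⟩ h
    simp only [SetLike.mem_coe] at ha hb ha' hb' h
    have h1 : a - a' = b' - b := by
      rw [sub_eq_sub_iff_add_eq_add, add_comm, h, add_comm]
    have h2 : a - a' ∈ l ⊓ C := ⟨l.sub_mem ha ha', by rw [SetLike.mem_coe, h1]; exact C.sub_mem hb' hb⟩
    rw [hC.inf_eq_bot, Submodule.mem_bot] at h2
    rw [h2] at h1
    rw [Prod.mk.injEq]
    exact ⟨sub_eq_zero.mp h2, (sub_eq_zero.mp h1.symm).symm⟩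

lemma line_bounds (hcard : Fintype.card F = q ^ 2) (hq : 3 ≤ q)
    {f : MvPolynomial (Fin 7) F} (hf : f.IsHomogeneous (q+1))
    (hb : ∀ u v : Fin 7 → F, ∃ s t : F, ¬ (s = 0 ∧ t = 0) ∧ eval (s • u + t • v) f = 0)
    (L : Submodule F (Fin 7 → F)) (hL : finrank F L = 2) (hne : ∃ u ∈ L, eval u f ≠ 0) :
    q^2 ≤ zc f L ∧ zc f L + q ≤ q^3 + q^2 := by
  classical
  obtain ⟨u, huL, huf⟩ := hne
  have hu0 : u ≠ 0 := by rintro rfl; exact huf (hom_eval_zero hf (by omega))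
  have hsp : Submodule.span F {u} ≤ L := by
    rw [Submodule.span_singleton_le_iff_mem]; exact huL
  constructor
  · obtain ⟨m, hmL, hm⟩ : ∃ m ∈ L, m ∉ Submodule.span F {u} := by
      by_contra hcon
      push Not at hcon
      have := Submodule.finrank_mono (show L ≤ Submodule.span F {u} from hcon)
      rw [hL, finrank_span_singleton hu0] at this
      omega
    obtain ⟨s, t, hst, h0⟩ := hb u m
    have hv0 : s • u + t • m ≠ 0 := by
      intro h
      by_cases ht : t = 0
      · rw [ht, zero_smul, add_zero, smul_eq_zero] at h
        rcases h with h | h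
        · exact hst ⟨h, ht⟩
        · exact hu0 h
      · apply hm
        rw [Submodule.mem_span_singleton]
        refine ⟨- (t⁻¹ * s), ?_⟩
        have h1 : t • m = - (s • u) := eq_neg_of_add_eq_zero_right h
        calc -(t⁻¹ * s) • u = t⁻¹ • (-(s • u)) := by module
          _ = m := by rw [← h1, smul_smul, inv_mul_cancel₀ ht, one_smul]
    have h1 := ncard_submodule (F := F) (Submodule.span F {s • u + t • m})
    rw [finrank_span_singleton hv0, hcard, pow_one] at h1
    rw [← h1]
    apply Set.ncard_le_ncard _ (Set.toFinite _)
    intro v hv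
    obtain ⟨a, rfl⟩ := Submodule.mem_span_singleton.mp hv
    exact ⟨L.smul_mem _ (L.add_mem (L.smul_mem _ huL) (L.smul_mem _ hmL)), hom_smul_zero hf a h0⟩
  · have h1 := fib_le (fun t : F => t • u) ((L : Set (Fin 7 → F)) \ (Submodule.span F {u} : Submodule F (Fin 7 → F))) (by
      intro e v
      simp only [Set.mem_sdiff, SetLike.mem_coe]
      rw [Submodule.add_mem_iff_left _ (L.smul_mem e huL), Submodule.add_mem_iff_left _ (Submodule.smul_mem _ e (Submodule.mem_span_singleton_self u))])
      (fun v => eval v f = 0) (q+1) (by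
        intro v hv
        apply linePoly_roots_le _ _ _ _ (linePoly_natDegree_le hf v u)
        intro h0
        apply huf
        rw [← linePoly_coeff_top hf v u, h0]; simp)
    have h2 := card_diff L (Submodule.span F {u})
    rw [inf_eq_right.mpr hsp, finrank_span_singleton hu0, hL, hcard] at h2
    have h3 := zc_split f L (Submodule.span F {u})
    have h4 : zc f (L ⊓ Submodule.span F {u}) = 1 := by
      unfold zc
      rw [inf_eq_right.mpr hsp, Set.ncard_eq_one]
      refine ⟨0, ?_⟩
      ext v
      simp only [Set.mem_ofPred_eq, Set.mem_singleton_iff]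
      constructor
      · rintro ⟨hv, hvf⟩
        obtain ⟨a, rfl⟩ := Submodule.mem_span_singleton.mp hv
        by_cases ha : a = 0
        · simp [ha]
        · rw [hom_smul_zero_iff hf ha] at hvf; exact absurd hvf huf
      · rintro rfl
        exact ⟨Submodule.zero_mem _, hom_eval_zero hf (by omega)⟩
    rw [h4] at h3
    rw [hcard] at h1
    set a := {v | v ∈ (L : Set (Fin 7 → F)) \ (Submodule.span F {u} : Submodule F (Fin 7 → F)) ∧ eval v f = 0}.ncard
    set b := ((L : Set (Fin 7 → F)) \ (Submodule.span F {u} : Submodule F (Fin 7 → F))).ncard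
    rw [h3]
    zify at h1 h2 ⊢
    have hb' : (b:ℤ) = q^4 - q^2 := by linear_combination h2
    rw [hb'] at h1
    have h5 : (q:ℤ)^2 * a ≤ q^2 * ((q^2-1)*(q+1)) := by
      calc _ ≤ _ := h1
        _ = _ := by ring
    have h6 := le_of_mul_le_mul_left h5 (by positivity)
    nlinarith
end step7

section step7b
variable {F : Type*} [Field F] [Fintype F] {q : ℕ}

lemma hyper (hcard : Fintype.card F = q ^ 2) (hqF : (q : F) = 0) (hq : 3 ≤ q)
    {f : MvPolynomial (Fin 7) F} (hf : f.IsHomogeneous (q+1))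
    (hns : ∀ W : Submodule F (Fin 7 → F), finrank F W = 4 → ∃ v ∈ W, eval v f ≠ 0)
    (hV : {v : Fin 7 → F | eval v f = 0}.ncard + q^7 = q^13 + q^6)
    (Sg : Submodule F (Fin 7 → F)) (hS4 : finrank F Sg = 4)
    (hSz : zc f Sg = q^6)
    (H : Submodule F (Fin 7 → F)) (hH : finrank F H = 6) :
    zc f H + q^7 = q^11 + q^6 ∨ zc f H + q^5 = q^11 + q^6 := by
  classical
  have hb := blocking hcard hqF hq hf hV
  obtain ⟨π, h3, hπS, hπ⟩ := exists_pi hcard hq hf hb Sg hS4 hSz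
  have hπ0 : ∀ v ∈ π, eval v f = 0 := fun v hv => (hπ v (hπS hv)).mpr hv
  have hN : ∀ c, c ∉ Sg → {x : π | eval (c + (x : Fin 7 → F)) f = 0}.ncard = q^5 :=
    fun c hc => N_exact hcard hq hf hns hV Sg hS4 π h3 hπS hπ hc
  have hM := fun c (hc : c ∉ Sg) => Mc_exists hcard hq hf π h3 hπ0 (hN c hc)
  have hK := ker_contains (phiL hf) Sg hS4 π h3 (fun c hc => by
    obtain ⟨M, h1, h2, h3, -⟩ := hM c hc
    exact ⟨M, h1, h2, h3⟩)
  have hcardπ : Fintype.card π = q^6 := by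
    rw [← Nat.card_eq_fintype_card, Module.natCard_eq_pow_finrank (K := F), h3, Nat.card_eq_fintype_card, hcard]; ring
  -- subspaces containing π
  have hzS : ∀ X : Submodule F (Fin 7 → F), π ≤ X → zc f (X ⊓ Sg) = q^6 := by
    intro X hX
    have h1 := ncard_submodule (F := F) π
    rw [h3, hcard, ← pow_mul] at h1
    rw [show q^6 = q^(2*3) from rfl, ← h1]
    unfold zc
    congr 1
    ext v
    simp only [Set.mem_ofPred_eq, SetLike.mem_coe, Submodule.mem_inf]
    constructor
    · rintro ⟨⟨a, b⟩, c⟩; exact (hπ v b).mp c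
    · intro h; exact ⟨⟨hX h, hπS h⟩, hπ0 v h⟩
  have hbig : ∀ X : Submodule F (Fin 7 → F), π ≤ X →
      q^6 * zc f X + q^5 * (q^2) ^ finrank F ↥(X ⊓ Sg) = q^6 * q^6 + q^5 * (q^2) ^ finrank F X := by
    intro X hX
    have h1 := fibX f X Sg (fun x : π => (x : Fin 7 → F)) (fun e => ⟨hX e.2, hπS e.2⟩) (q^5)
      (fun v _ hv => hN v hv)
    rwa [hcardπ, hzS X hX, hcard] at h1
  by_cases hπH : π ≤ H
  · have h1 := hbig H hπH
    rw [hH] at h1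
    have h2 : finrank F ↥(H ⊓ Sg) ≤ 4 := by rw [← hS4]; exact Submodule.finrank_mono inf_le_right
    have h4 : 3 ≤ finrank F ↥(H ⊓ Sg) := by rw [← h3]; exact Submodule.finrank_mono (le_inf hπH hπS)
    have h5 : finrank F ↥(H ⊓ Sg) = 3 ∨ finrank F ↥(H ⊓ Sg) = 4 := by omega
    rcases h5 with h5 | h5
    · right
      rw [h5] at h1
      have : q^6 * (zc f H + q^5) = q^6 * (q^11 + q^6) := by linarith
      exact Nat.eq_of_mul_eq_mul_left (by positivity) this
    · left
      rw [h5] at h1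
      have : q^6 * (zc f H + q^7) = q^6 * (q^11 + q^6) := by linarith
      exact Nat.eq_of_mul_eq_mul_left (by positivity) this
  · have hl2 := inter_dim hH hπH le_rfl
    set l := H ⊓ π with hl
    have hl2' : finrank F l = 2 := by omega
    have hlH : l ≤ H := inf_le_left
    have hlπ : l ≤ π := inf_le_right
    obtain ⟨x, hxl, hx0⟩ : ∃ x ∈ l, x ≠ 0 := by
      have : l ≠ ⊥ := by intro h; rw [h, finrank_bot] at hl2'; omega
      exact Submodule.exists_mem_ne_zero_of_ne_bot this
    obtain ⟨y, hyl, hyx⟩ : ∃ y ∈ l, y ∉ Submodule.span F {x} := by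
      by_contra hcon
      push Not at hcon
      have := Submodule.finrank_mono (show l ≤ Submodule.span F {x} from hcon)
      rw [hl2', finrank_span_singleton hx0] at this
      omega
    have hy0 : y ≠ 0 := by rintro rfl; exact hyx (Submodule.zero_mem _)
    have hgen : ∀ M : Submodule F (Fin 7 → F), x ∈ M → y ∈ M → l ≤ M := by
      intro M hxM hyM
      have h1 : Submodule.span F {x} < Submodule.span F {x} ⊔ Submodule.span F {y} := by
        rw [left_lt_sup, Submodule.span_singleton_le_iff_mem]; exact hyx
      have h2 := Submodule.finrank_lt_finrank_of_lt h1
      rw [finrank_span_singleton hx0] at h2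
      have h4 : Submodule.span F {x} ⊔ Submodule.span F {y} ≤ l := by
        rw [sup_le_iff, Submodule.span_singleton_le_iff_mem, Submodule.span_singleton_le_iff_mem]
        exact ⟨hxl, hyl⟩
      have h5 := Submodule.eq_of_le_of_finrank_le h4 (by omega)
      rw [← h5, sup_le_iff, Submodule.span_singleton_le_iff_mem, Submodule.span_singleton_le_iff_mem]
      exact ⟨hxM, hyM⟩
    obtain ⟨hSx, hKx⟩ := hK x (hlπ hxl) hx0
    obtain ⟨hSy, hKy⟩ := hK y (hlπ hyl) hy0
    set Kx := LinearMap.ker (phiL hf x) with hKxd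
    set Ky := LinearMap.ker (phiL hf y) with hKyd
    have hinf5 : ∀ A B : Submodule F (Fin 7 → F), finrank F A = 6 → finrank F B = 6 → 5 ≤ finrank F ↥(A ⊓ B) := by
      intro A B hA hB
      have h1 := Submodule.finrank_sup_add_finrank_inf_eq A B
      have h2 := Submodule.finrank_le (A ⊔ B)
      simp only [finrank_fintype_fun_eq_card, Fintype.card_fin] at h2
      omega
    have hKne : ¬ Kx ≤ Ky := by
      intro hle
      obtain ⟨x', hx'π, hx'l⟩ : ∃ x' ∈ π, x' ∉ l := by
        by_contra hcon
        push Not at hcon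
        have := Submodule.finrank_mono (show π ≤ l from hcon)
        omega
      have hx'0 : x' ≠ 0 := by rintro rfl; exact hx'l (Submodule.zero_mem _)
      obtain ⟨-, hKx'⟩ := hK x' hx'π hx'0
      have h5 := hinf5 Kx (LinearMap.ker (phiL hf x')) hKx hKx'
      obtain ⟨c, hc, hcS⟩ : ∃ c ∈ Kx ⊓ LinearMap.ker (phiL hf x'), c ∉ Sg := by
        by_contra hcon
        push Not at hcon
        have := Submodule.finrank_mono (show Kx ⊓ LinearMap.ker (phiL hf x') ≤ Sg from hcon)
        omega
      obtain ⟨M, hMπ, hM2, hMy, -⟩ := hM c hcS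
      have m1 : x ∈ M := (hMy x (hlπ hxl)).mp hc.1
      have m2 : y ∈ M := (hMy y (hlπ hyl)).mp (hle hc.1)
      have m3 : x' ∈ M := (hMy x' hx'π).mp hc.2
      have h6 := Submodule.eq_of_le_of_finrank_eq (hgen M m1 m2) (by omega)
      rw [h6] at hx'l
      exact hx'l m3
    have hU5 : finrank F ↥(Kx ⊓ Ky) = 5 := by
      have h1 := hinf5 Kx Ky hKx hKy
      have h2 := Submodule.finrank_lt_finrank_of_lt (inf_lt_left.mpr hKne)
      omega
    set U := Kx ⊓ Ky with hU
    have hSU : Sg ≤ U := le_inf hSx hSy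
    have hπU : π ≤ U := hπS.trans hSU
    have d1 := inter_dim hH hπH (hπS.trans hSx)
    have d2 := inter_dim hH hπH hπU
    have hfibq : ∀ w ∈ l, ∀ v, phiL hf w v ≠ 0 → v ∉ Sg → {t : F | eval (v + t • w) f = 0}.ncard = q := by
      intro w hw v hwv hvS
      obtain ⟨M, hMπ, hM2, hMy, -, hM3⟩ := hM v hvS
      exact hM3 w (hlπ hw) (fun h => hwv ((hMy w (hlπ hw)).mpr h))
    have f1 := fibX f H Kx (fun t : F => t • x) (fun t => ⟨H.smul_mem t (hlH hxl), Kx.smul_mem t (hSx (hπS (hlπ hxl)))⟩) q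
      (fun v _ hv => hfibq x hxl v (fun h => hv h) (fun h => hv (hSx h)))
    have f2 := fibX f (H ⊓ Kx) Ky (fun t : F => t • y) (fun t => ⟨⟨H.smul_mem t (hlH hyl), Kx.smul_mem t (hSx (hπS (hlπ hyl)))⟩, Ky.smul_mem t (hSy (hπS (hlπ hyl)))⟩) q
      (fun v _ hv => hfibq y hyl v (fun h => hv h) (fun h => hv (hSy h)))
    rw [inf_assoc, ← hU] at f2
    have d1' : finrank F ↥(H ⊓ Kx) = 5 := by omega
    have d2' : finrank F ↥(H ⊓ U) = 4 := by omega
    rw [hcard, d1', hH] at f1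
    rw [hcard, d1', d2'] at f2
    have hzHW : zc f H + q^7 = zc f (H ⊓ U) + q^11 := by
      have : q^2 * (zc f H + q^7) = q^2 * (zc f (H ⊓ U) + q^11) := by linarith
      exact Nat.eq_of_mul_eq_mul_left (by positivity) this
    -- structure inside U
    have hinv : ∀ v ∈ U, ∀ m ∈ l, (eval v f = 0 ↔ eval (v + m) f = 0) := by
      intro v hv m hm
      by_cases hvS : v ∈ Sg
      · rw [hπ v hvS, hπ (v + m) (Sg.add_mem hvS (hπS (hlπ hm))), Submodule.add_mem_iff_left _ (hlπ hm)]
      · obtain ⟨M, hMπ, hM2, hMy, hM4, -⟩ := hM v hvS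
        apply hM4
        exact hgen M ((hMy x (hlπ hxl)).mp hv.1) ((hMy y (hlπ hyl)).mp hv.2) hm
    have hlU : l ≤ U := hlπ.trans hπU
    obtain ⟨C, hC⟩ := Submodule.exists_isCompl l
    have hUC := prod_dim hC hlU
    have hUC3 : finrank F ↥(U ⊓ C) = 3 := by omega
    have zU := hbig U hπU
    rw [inf_eq_right.mpr hSU, hS4, hU5] at zU
    have zU2 := prod_count f hC hlU hinv
    rw [hl2', hcard] at zU2
    have zB : zc f (U ⊓ C) + q^3 = q^2 + q^5 := by
      rw [zU2] at zU
      have : q^10 * (zc f (U ⊓ C) + q^3) = q^10 * (q^2 + q^5) := by linarith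
      exact Nat.eq_of_mul_eq_mul_left (by positivity) this
    have hlW : l ≤ H ⊓ U := le_inf hlH hlU
    have hWC := prod_dim hC hlW
    have zW := prod_count f hC hlW (fun v hv => hinv v hv.2)
    rw [hl2', hcard] at zW
    have hWC2 : finrank F ↥((H ⊓ U) ⊓ C) = 2 := by omega
    set B := U ⊓ C with hB
    have htr : ∀ L : Submodule F B, {v : B | v ∈ {v : B | eval (v : Fin 7 → F) f = 0} ∧ v ∈ L}.ncard = zc f (L.map B.subtype) := by
      intro L
      unfold zc
      rw [← Set.ncard_image_of_injective _ (Subtype.val_injective : Function.Injective (Subtype.val : B → (Fin 7 → F)))]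
      congr 1
      ext v
      simp only [Set.mem_image, Set.mem_ofPred_eq, Submodule.mem_map]
      constructor
      · rintro ⟨w, ⟨h1, h2⟩, rfl⟩
        exact ⟨⟨w, h2, rfl⟩, h1⟩
      · rintro ⟨⟨w, h2, rfl⟩, h1⟩
        exact ⟨w, ⟨h1, h2⟩, rfl⟩
    have hmapdim : ∀ L : Submodule F B, finrank F ↥(L.map B.subtype) = finrank F L := by
      intro L
      exact Submodule.finrank_map_subtype_eq B L
    have hbounds : ∀ L : Submodule F (Fin 7 → F), L ≤ B → finrank F L = 2 → q^2 ≤ zc f L ∧ zc f L + q ≤ q^3 + q^2 := by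
      intro L hLB hL2
      apply line_bounds hcard hq hf hb L hL2
      by_contra hcon
      push Not at hcon
      have hdis : l ⊓ L = ⊥ := by
        rw [eq_bot_iff, ← hC.inf_eq_bot]
        exact inf_le_inf_left _ (hLB.trans inf_le_right)
      have h4 := Submodule.finrank_sup_add_finrank_inf_eq l L
      rw [hdis, finrank_bot] at h4
      obtain ⟨v, hv, hvf⟩ := hns (l ⊔ L) (by omega)
      obtain ⟨a, ha, b, hb, rfl⟩ := Submodule.mem_sup.mp hv
      apply hvf
      rw [add_comm, ← hinv b (hLB hb).1 a ha]
      exact hcon b hb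
    have hquad := quad hcard hq hUC3 {v : B | eval (v : Fin 7 → F) f = 0} (by
        change eval ((0 : B) : Fin 7 → F) f = 0
        exact hom_eval_zero hf (by omega)) (by
        intro v hv c
        exact hom_smul_zero hf c hv) (by
        have h1 := htr ⊤
        rw [Submodule.map_subtype_top] at h1
        simp only [Submodule.mem_top, and_true] at h1
        rw [← zB, ← h1]; rfl) (by
        intro L hL2
        rw [htr]
        exact hbounds _ (Submodule.map_subtype_le _ _) (by rw [hmapdim, hL2]))
        (((H ⊓ U) ⊓ C).comap B.subtype) (by
          rw [← hmapdim, Submodule.map_comap_subtype]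
          rw [inf_eq_right.mpr (show (H ⊓ U) ⊓ C ≤ B from inf_le_inf_right _ inf_le_right)]
          exact hWC2)
    rw [htr, Submodule.map_comap_subtype, inf_eq_right.mpr (show (H ⊓ U) ⊓ C ≤ B from inf_le_inf_right _ inf_le_right)] at hquad
    rcases hquad with h | h
    · left
      rw [hzHW, zW, h]; ring
    · right
      have h1 : q^4 * (zc f ((H ⊓ U) ⊓ C) + q) = q^4 * (q^3 + q^2) := by rw [h]
      have h2 : (q^2)^2 * zc f ((H ⊓ U) ⊓ C) = q^4 * zc f ((H ⊓ U) ⊓ C) := by ring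
      rw [h2] at zW
      zify at h1 zW hzHW ⊢
      linear_combination hzHW + zW + h1
end step7b

lemma zc_conv {F : Type} [Field F] [Fintype F] {q : ℕ} (hcard : Fintype.card F = q ^ 2) {f : MvPolynomial (Fin 7) F}
    (hf : f.IsHomogeneous (q+1)) (W : Submodule F (Fin 7 → F)) :
    zc f W = (hypersurfacePts f ∩ projPts W).ncard * (q^2 - 1) + 1 := by
  classical
  have hmemW : ∀ P : Projectivization F (Fin 7 → F), P ∈ projPts W ↔ P.rep ∈ W := by
    intro P
    change P.submodule ≤ W ↔ _
    rw [Projectivization.submodule_eq, Submodule.span_singleton_le_iff_mem]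
  have h1 : {v | v ∈ W ∧ eval v f = 0} \ {0} = (fun p : Projectivization F (Fin 7 → F) × F => p.2 • p.1.rep) ''
      ((hypersurfacePts f ∩ projPts W) ×ˢ ({0}ᶜ : Set F)) := by
    ext v
    simp only [Set.mem_sdiff, Set.mem_ofPred_eq, Set.mem_singleton_iff, Set.mem_image, Set.mem_prod, Set.mem_inter_iff,
      Set.mem_compl_iff, Prod.exists, hmemW]
    constructor
    · rintro ⟨⟨hvW, hvf⟩, hv0⟩
      obtain ⟨a, ha⟩ := Projectivization.exists_smul_eq_mk_rep F v hv0
      have ha' : (a : F) • v = (Projectivization.mk F v hv0).rep := ha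
      refine ⟨Projectivization.mk F v hv0, (a : F)⁻¹, ⟨⟨?_, ?_⟩, by simp⟩, ?_⟩
      · change eval _ f = 0
        rw [← ha']; exact hom_smul_zero hf _ hvf
      · rw [← ha']; exact W.smul_mem _ hvW
      · rw [← ha', smul_smul, inv_mul_cancel₀ a.ne_zero, one_smul]
    · rintro ⟨P, a, ⟨⟨hP, hPW⟩, ha⟩, rfl⟩
      exact ⟨⟨W.smul_mem _ hPW, hom_smul_zero hf _ hP⟩, smul_ne_zero ha P.rep_nonzero⟩
  have hinj : Set.InjOn (fun p : Projectivization F (Fin 7 → F) × F => p.2 • p.1.rep)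
      ((hypersurfacePts f ∩ projPts W) ×ˢ ({0}ᶜ : Set F)) := by
    rintro ⟨P, a⟩ ⟨_, ha⟩ ⟨P', a'⟩ ⟨_, ha'⟩ h
    have ha : a ≠ 0 := ha
    have ha' : a' ≠ 0 := ha'
    have h : a • P.rep = a' • P'.rep := h
    have hPP : P = P' := by
      rw [← P.mk_rep, ← P'.mk_rep, Projectivization.mk_eq_mk_iff']
      refine ⟨a⁻¹ * a', ?_⟩
      rw [mul_smul, ← h, smul_smul, inv_mul_cancel₀ ha, one_smul]
    subst hPP
    have := smul_left_injective F P.rep_nonzero h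
    rw [this]
  have h2 : (0 : Fin 7 → F) ∈ {v | v ∈ W ∧ eval v f = 0} := ⟨W.zero_mem, hom_eval_zero hf (by omega)⟩
  have h3 := Set.ncard_sdiff_singleton_add_one h2 (Set.toFinite _)
  rw [h1, hinj.ncard_image, Set.ncard_prod, Set.ncard_compl, Set.ncard_singleton, Nat.card_eq_fintype_card, hcard] at h3
  exact h3.symm

/-- Under the hypotheses of the main theorem, every hyperplane of `PG(6,q²)` meets `S` in
exactly `q⁹ + q⁷ + q⁴ + q² + 1` or exactly `q⁹ + q⁷ + q⁵ + q⁴ + q² + 1` rational points;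
in particular no hyperplane meets `S` in exactly `q⁹ + q⁷ + q⁵ + q² + 1` rational
points. -/
theorem stmt_14 (q : ℕ) (hq : ∃ p k : ℕ, p.Prime ∧ 0 < k ∧ q = p ^ k) (hq2 : 2 < q)
    (F : Type) [Field F] [Fintype F] (hcardF : Fintype.card F = q ^ 2)
    (f : MvPolynomial (Fin 7) F) (hf0 : f ≠ 0) (hfdeg : f.IsHomogeneous (q + 1))
    (S : Set (Projectivization F (Fin 7 → F))) (hS : S = hypersurfacePts f)
    (hnosolid : ¬ ∃ W : Submodule F (Fin 7 → F), Module.finrank F W = 4 ∧ projPts W ⊆ S)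
    (hcardS : S.ncard = q ^ 11 + q ^ 9 + q ^ 7 + q ^ 4 + q ^ 2 + 1)
    (hsolid : ∃ W : Submodule F (Fin 7 → F), Module.finrank F W = 4 ∧
      (S ∩ projPts W).ncard = q ^ 4 + q ^ 2 + 1) :
    (∀ H : Submodule F (Fin 7 → F), Module.finrank F H = 6 →
      (S ∩ projPts H).ncard = q ^ 9 + q ^ 7 + q ^ 4 + q ^ 2 + 1 ∨
      (S ∩ projPts H).ncard = q ^ 9 + q ^ 7 + q ^ 5 + q ^ 4 + q ^ 2 + 1) ∧
    (∀ H : Submodule F (Fin 7 → F), Module.finrank F H = 6 →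
      (S ∩ projPts H).ncard ≠ q ^ 9 + q ^ 7 + q ^ 5 + q ^ 2 + 1) := by
  classical
  subst hS
  have hqF : (q : F) = 0 := by
    have h := FiniteField.cast_card_eq_zero F
    rw [hcardF] at h
    push_cast at h
    exact pow_eq_zero_iff (two_ne_zero) |>.mp h
  have h1q : 1 ≤ q^2 := Nat.one_le_pow _ _ (by omega)
  have hconv := zc_conv hcardF hfdeg
  have hns : ∀ W : Submodule F (Fin 7 → F), finrank F W = 4 → ∃ v ∈ W, eval v f ≠ 0 := by
    intro W hW
    by_contra hcon
    push Not at hcon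
    refine hnosolid ⟨W, hW, ?_⟩
    intro P hP
    change eval P.rep f = 0
    apply hcon
    change P.submodule ≤ W at hP
    rwa [Projectivization.submodule_eq, Submodule.span_singleton_le_iff_mem] at hP
  have hV : {v : Fin 7 → F | eval v f = 0}.ncard + q^7 = q^13 + q^6 := by
    have h1 := hconv ⊤
    have h2 : projPts (⊤ : Submodule F (Fin 7 → F)) = Set.univ := by
      ext P; simp [projPts]
    have h3 : zc f ⊤ = {v : Fin 7 → F | eval v f = 0}.ncard := by simp [zc]
    rw [h2, Set.inter_univ, hcardS, h3] at h1
    rw [h1]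
    zify [h1q]; ring
  obtain ⟨Sg, hS4, hSc⟩ := hsolid
  have hSz : zc f Sg = q^6 := by
    rw [hconv, hSc]
    zify [h1q]; ring
  have main : ∀ H : Submodule F (Fin 7 → F), Module.finrank F H = 6 →
      (hypersurfacePts f ∩ projPts H).ncard = q ^ 9 + q ^ 7 + q ^ 4 + q ^ 2 + 1 ∨
      (hypersurfacePts f ∩ projPts H).ncard = q ^ 9 + q ^ 7 + q ^ 5 + q ^ 4 + q ^ 2 + 1 := by
    intro H hH
    have h := hyper hcardF hqF hq2 hfdeg hns hV Sg hS4 hSz H hH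
    rw [hconv H] at h
    have hpos : 0 < q^2 - 1 := by
      have : 3^2 ≤ q^2 := Nat.pow_le_pow_left hq2 2
      omega
    rcases h with h | h
    · left
      apply Nat.eq_of_mul_eq_mul_right hpos
      zify [h1q] at h ⊢
      linear_combination h
    · right
      apply Nat.eq_of_mul_eq_mul_right hpos
      zify [h1q] at h ⊢
      linear_combination h
  refine ⟨main, ?_⟩
  intro H hH heq
  have h5 : q^4 < q^5 := Nat.pow_lt_pow_right (by omega) (by omega)
  have h4 : 0 < q^4 := by positivity
  rcases main H hH with h | h <;> omega
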